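/- arXiv:1103.0356 — 3 statements merged into one kernel-verified Lean document; each statement's English description precedes it below -/
import Mathlib

section
/- Let (A, τ) be simple with A = A⁺ and ε = 1 (orthogonal case). Then for every positive integer d, up to isomorphism there is a unique simple 1-Hermitian (sl₂, A)-module of rank 4d, and there is no simple 1-Hermitian (sl₂, A)-module of rank 4d - 2. -/
/-!
Let `n` be maximal with `e ^ n ≠ 0`. The relation `[e^(n+1), f] = (n+1) (h - n) e^n` shows that
`h = n` on the image of `e ^ n`, so this image consists of highest weight vectors of weight `n`.
On highest weight vectors of weight `n`, `e^n f^n` is a nonzero scalar; as `e` is skew-adjoint and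
the form is non-degenerate, the pairing `β(u, v) = B u (f^n v)` on them is therefore nonzero
(`sl2_exists_pair`). It satisfies `β(u, v) = (-1)^n β(v, u)`. This works over any field of
characteristic zero and uses no complete reducibility.

Highest weight vectors of weight `n` whose Gram matrix for `β` is invertible generate a
non-degenerate submodule with basis the strings `f^k w`, `k ≤ n` (`sl2_basis`). In a simple module
there are thus two cases. If `β(u, u) ≠ 0` for some `u`, then `n` is even and the rank is `n + 1`,
which is odd. Otherwise `β` is alternating, hence `n` is odd, and a pair with `β(u, v) = 1` yields
a basis of size `2 (n + 1)`, a multiple of `4`, in which the operators and the form are given by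
formulas depending only on `n` (`sl2_simple_std`). This gives uniqueness in rank `4d` and
non-existence in rank `4d - 2`. Conversely these formulas define a Hermitian module for each odd
`n` (`sl2_std_exists`), and it is simple (`sl2_std_simple`), because `sl2_exists_pair` applies to
every nonzero non-degenerate submodule.
-/


/-- `(E, B, H, Eop, Fop)` is an `ε`-Hermitian `(sl₂, A)`-module (with trivial involution
on the field `A`): `B` is a non-degenerate `ε`-symmetric `A`-bilinear form and
`H, Eop, Fop` are `A`-linear endomorphisms satisfying the `sl₂` commutation relations
(so they define a Lie algebra action of `sl₂` via the standard basis `h, e, f`) which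
are skew-adjoint for `B`. -/
def IsSl2Herm (A : Type) [CommRing A] (ε : A) (E : Type) [AddCommGroup E] [Module A E]
    (B : E → E → A) (H Eop Fop : Module.End A E) : Prop :=
  (∀ u u' v, B (u + u') v = B u v + B u' v) ∧
  (∀ u v v', B u (v + v') = B u v + B u v') ∧
  (∀ (a : A) (u v : E), B (a • u) v = a * B u v) ∧
  (∀ u v, B u v = ε * B v u) ∧
  (∀ u, (∀ v, B u v = 0) → u = 0) ∧
  (H * Eop - Eop * H = (2 : A) • Eop) ∧
  (H * Fop - Fop * H = (-2 : A) • Fop) ∧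
  (Eop * Fop - Fop * Eop = H) ∧
  (∀ u v, B (H u) v + B u (H v) = 0) ∧
  (∀ u v, B (Eop u) v + B u (Eop v) = 0) ∧
  (∀ u v, B (Fop u) v + B u (Fop v) = 0)

/-- The `ε`-Hermitian `(sl₂, A)`-module is simple: nonzero, and every `sl₂`-stable
non-degenerate submodule is `⊥` or `⊤`. -/
def IsSimpleSl2Herm (A : Type) [CommRing A] (ε : A) (E : Type) [AddCommGroup E]
    [Module A E] (B : E → E → A) (H Eop Fop : Module.End A E) : Prop :=
  IsSl2Herm A ε E B H Eop Fop ∧ Nontrivial E ∧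
    ∀ N : Submodule A E, (∀ u ∈ N, H u ∈ N) → (∀ u ∈ N, Eop u ∈ N) →
      (∀ u ∈ N, Fop u ∈ N) → (∀ u ∈ N, (∀ v ∈ N, B u v = 0) → u = 0) →
      N = ⊥ ∨ N = ⊤

/-- An isomorphism of `ε`-Hermitian `(sl₂, A)`-modules: an `A`-linear isomorphism
matching the forms and intertwining the `sl₂`-actions. -/
def Sl2HermIso (A : Type) [CommRing A]
    (E₁ : Type) [AddCommGroup E₁] [Module A E₁]
    (E₂ : Type) [AddCommGroup E₂] [Module A E₂]
    (B₁ : E₁ → E₁ → A) (H₁ E₁op F₁op : Module.End A E₁)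
    (B₂ : E₂ → E₂ → A) (H₂ E₂op F₂op : Module.End A E₂) : Prop :=
  ∃ φ : E₁ ≃ₗ[A] E₂, (∀ u v, B₂ (φ u) (φ v) = B₁ u v) ∧
    (∀ v, φ (H₁ v) = H₂ (φ v)) ∧ (∀ v, φ (E₁op v) = E₂op (φ v)) ∧
    (∀ v, φ (F₁op v) = F₂op (φ v))

/-! ### Commutation relations in `sl₂` -/

/-- Linear independence of the powers of `X`, which are eigenvectors of `ad H` with pairwise
distinct eigenvalues `k * c`, forces `X` to be nilpotent. -/
theorem sl2_nilpotent {A : Type} [Field A] [CharZero A] {E : Type} [AddCommGroup E] [Module A E]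
    [Module.Finite A E] (H X : Module.End A E) (c : A) (hc : c ≠ 0)
    (h : H * X - X * H = c • X) : ∃ k : ℕ, X ^ k = 0 := by
  by_contra! hne
  let ad : Module.End A (Module.End A E) := LinearMap.mulLeft A H - LinearMap.mulRight A H
  have had : ∀ k : ℕ, ad (X ^ k) = ((k : A) * c) • X ^ k := by
    intro k
    simp only [ad, LinearMap.sub_apply, LinearMap.mulLeft_apply, LinearMap.mulRight_apply]
    induction k with
    | zero => simp
    | succ k ih =>
      have : H * X ^ (k + 1) - X ^ (k + 1) * H
          = (H * X ^ k - X ^ k * H) * X + X ^ k * (H * X - X * H) := by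
        rw [pow_succ]; noncomm_ring
      rw [this, ih, h, smul_mul_assoc, mul_smul_comm, ← pow_succ, ← add_smul]
      push_cast; ring_nf
  have hli := Module.End.eigenvectors_linearIndependent' ad (fun k : ℕ => (k : A) * c)
    (fun a b hab => by simpa [hc] using hab) (fun k : ℕ => X ^ k)
    (fun k => ⟨Module.End.mem_eigenspace_iff.2 (had k), hne k⟩)
  exact not_finite_iff_infinite.2 inferInstance (hli.finite)

section Ops

variable {A : Type} [Field A] {E : Type} [AddCommGroup E] [Module A E]

theorem sl2_comm_apply {c : A} {X Y Z : Module.End A E} (h : X * Y - Y * X = c • Z) (u : E) :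
    X (Y u) = Y (X u) + c • Z u := by
  have := congrArg (fun T : Module.End A E => T u) h
  simp only [LinearMap.sub_apply, Module.End.mul_apply, LinearMap.smul_apply] at this
  rw [← this]; abel

/-- `[e^(k+1), f] = (k+1) (h - k) e^k`. -/
theorem sl2_e_pow_f {H X Y : Module.End A E} (hX : H * X - X * H = (2 : A) • X)
    (hXY : X * Y - Y * X = H) (k : ℕ) (u : E) :
    (X ^ (k + 1)) (Y u) = Y ((X ^ (k + 1)) u)
      + ((k : A) + 1) • (H ((X ^ k) u) - (k : A) • (X ^ k) u) := by
  have h1 := sl2_comm_apply hX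
  have h2 := sl2_comm_apply (c := (1 : A)) (Z := H) (by rw [one_smul]; exact hXY)
  induction k with
  | zero => simp [h2]
  | succ k ih =>
    have h3 := h1 ((X ^ k) u)
    have h4 : X (H ((X ^ k) u)) = H ((X ^ (k + 1)) u) - (2 : A) • (X ^ (k + 1)) u := by
      rw [pow_succ', Module.End.mul_apply, h3]; abel
    rw [pow_succ', Module.End.mul_apply, ih, map_add, h2, map_smul, map_sub, map_smul, h4,
      ← Module.End.mul_apply X (X ^ k), ← pow_succ', ← Module.End.mul_apply X (X ^ (k + 1)),
      ← pow_succ']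
    push_cast
    module

theorem sl2_h_f_pow {H Y : Module.End A E} (hY : H * Y - Y * H = (-2 : A) • Y)
    {w : E} {n : ℕ} (hw : H w = (n : A) • w) (k : ℕ) :
    H ((Y ^ k) w) = ((n : A) - 2 * k) • (Y ^ k) w := by
  induction k with
  | zero => simp [hw]
  | succ k ih =>
    rw [pow_succ', Module.End.mul_apply, sl2_comm_apply hY, ih, map_smul]
    push_cast
    module

theorem sl2_e_f_pow {H X Y : Module.End A E} (hY : H * Y - Y * H = (-2 : A) • Y)
    (hXY : X * Y - Y * X = H)
    {w : E} {n : ℕ} (hXw : X w = 0) (hw : H w = (n : A) • w) (k : ℕ) :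
    X ((Y ^ k) w) = ((k : A) * (n - k + 1)) • (Y ^ (k - 1)) w := by
  have h2 := sl2_comm_apply (c := (1 : A)) (Z := H) (by rw [one_smul]; exact hXY)
  induction k with
  | zero => simp [hXw]
  | succ k ih =>
    rw [pow_succ', Module.End.mul_apply, h2, ih, sl2_h_f_pow hY hw, map_smul]
    rcases k with _ | k
    · simp
    · rw [← Module.End.mul_apply Y, ← pow_succ']
      simp only [Nat.add_sub_cancel]
      push_cast
      module

/-- The least `m` with `f^m w = 0` is at most `n + 1`, since `e f^m w = m (n - m + 1) f^(m-1) w`. -/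
theorem sl2_f_pow_eq_zero [CharZero A] [Module.Finite A E] {H X Y : Module.End A E}
    (hY : H * Y - Y * H = (-2 : A) • Y)
    (hXY : X * Y - Y * X = H)
    {w : E} {n : ℕ} (hXw : X w = 0) (hw : H w = (n : A) • w) {k : ℕ} (hk : n < k) :
    (Y ^ k) w = 0 := by
  have hex : ∃ k : ℕ, (Y ^ k) w = 0 := by
    obtain ⟨k, hk⟩ := sl2_nilpotent H Y (-2) (by norm_num) hY
    exact ⟨k, by rw [hk]; rfl⟩
  classical
  obtain ⟨m, hm, hmin⟩ : ∃ m, (Y ^ m) w = 0 ∧ ∀ j < m, (Y ^ j) w ≠ 0 :=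
    ⟨Nat.find hex, Nat.find_spec hex, fun j hj => Nat.find_min hex hj⟩
  have hmn : m ≤ n + 1 := by
    rcases m with _ | m
    · omega
    have h1 := sl2_e_f_pow hY hXY hXw hw (m + 1)
    rw [hm, map_zero] at h1
    have h2 := (smul_eq_zero.1 h1.symm).resolve_right (hmin _ (by simp))
    have h3 : ((m + 1 : ℕ) : A) ≠ 0 := Nat.cast_ne_zero.2 (by omega)
    have h4 := (mul_eq_zero.1 h2).resolve_left h3
    have h5 : (n : A) = m := by push_cast at h4; linear_combination h4
    have := Nat.cast_injective h5
    omega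
  obtain ⟨j, rfl⟩ := Nat.exists_eq_add_of_le' (hmn.trans hk)
  rw [pow_add, Module.End.mul_apply, hm, map_zero]

/-- Up to a nonzero scalar, `e^k` takes `f^n w` to `f^(n-k) w`
for `k ≤ n` and `w` a highest weight vector of weight `n`. -/
theorem sl2_e_pow_f_pow [CharZero A] {H X Y : Module.End A E} (hY : H * Y - Y * H = (-2 : A) • Y)
    (hXY : X * Y - Y * X = H)
    {w : E} {n : ℕ} (hXw : X w = 0) (hw : H w = (n : A) • w) (k : ℕ) (hk : k ≤ n) :
    ∃ c : A, c ≠ 0 ∧ (X ^ k) ((Y ^ n) w) = c • (Y ^ (n - k)) w := by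
  induction k with
  | zero => exact ⟨1, one_ne_zero, by simp⟩
  | succ k ih =>
    obtain ⟨c, hc, h⟩ := ih (by omega)
    refine ⟨c * (((n - k : ℕ) : A) * (k + 1 : ℕ)), ?_, ?_⟩
    · exact mul_ne_zero hc (mul_ne_zero (Nat.cast_ne_zero.2 (by omega))
        (Nat.cast_ne_zero.2 (by omega)))
    · rw [pow_succ', Module.End.mul_apply, h, map_smul, sl2_e_f_pow hY hXY hXw hw, smul_smul,
        Nat.sub_sub]
      congr 2
      rw [Nat.cast_sub (by omega : k ≤ n)]
      push_cast
      ring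

/-! ### The form and highest weight vectors -/

variable {B : E → E → A} {H X Y : Module.End A E}

/-- The form of a Hermitian module as a bilinear map. -/
def sl2Form (h : IsSl2Herm A 1 E B H X Y) : E →ₗ[A] E →ₗ[A] A :=
  LinearMap.mk₂ A B h.1 h.2.2.1 h.2.1 (fun a u v => by
    rw [h.2.2.2.1, h.2.2.1, h.2.2.2.1 v u]; simp)

theorem sl2_skew_pow {T : Module.End A E} (hT : ∀ u v, B (T u) v + B u (T v) = 0) (k : ℕ) :
    ∀ u v, B ((T ^ k) u) v = (-1) ^ k * B u ((T ^ k) v) := by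
  induction k with
  | zero => simp
  | succ k ih =>
    intro u v
    rw [pow_succ, Module.End.mul_apply, ih, eq_neg_of_add_eq_zero_left (hT _ _),
      ← Module.End.mul_apply T, ← pow_succ', ← pow_succ, pow_succ (-1 : A)]
    ring

/-- If `n` is maximal with `e^n ≠ 0`, then `h = n` on the image of `e^n`, and for
`B (e^n y) z ≠ 0` the highest weight vectors `e^n y` and `e^n z` pair nontrivially under
`(u, v) ↦ B u (f^n v)`. -/
theorem sl2_exists_pair [CharZero A] [Module.Finite A E] [Nontrivial E]
    (h : IsSl2Herm A 1 E B H X Y) :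
    ∃ (n : ℕ) (w w' : E), X w = 0 ∧ H w = (n : A) • w ∧ X w' = 0 ∧ H w' = (n : A) • w' ∧
      B w ((Y ^ n) w') ≠ 0 := by
  have h0 := h
  obtain ⟨-, -, -, -, hnd, hX, hY, hXY, sH, sX, sY⟩ := h
  have hex := sl2_nilpotent H X 2 two_ne_zero hX
  classical
  obtain ⟨m, hm, hmin⟩ : ∃ m, X ^ m = 0 ∧ ∀ j < m, X ^ j ≠ 0 :=
    ⟨Nat.find hex, Nat.find_spec hex, fun j hj => Nat.find_min hex hj⟩
  rcases m with _ | n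
  · simp at hm
  have hXn : ∀ y, X ((X ^ n) y) = 0 := fun y => by
    rw [← Module.End.mul_apply, ← pow_succ', hm]; rfl
  have hHn : ∀ y, H ((X ^ n) y) = (n : A) • (X ^ n) y := fun y => by
    have h1 := sl2_e_pow_f hX hXY n y
    rw [hm] at h1
    simp only [LinearMap.zero_apply, map_zero, zero_add] at h1
    have h3 : ((n : A) + 1) ≠ 0 := Nat.cast_add_one_ne_zero n
    exact sub_eq_zero.1 ((smul_eq_zero.1 h1.symm).resolve_left h3)
  obtain ⟨y, hy⟩ : ∃ y, (X ^ n) y ≠ 0 := by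
    by_contra! hcon
    exact hmin n (by omega) (LinearMap.ext hcon)
  obtain ⟨z, hz⟩ : ∃ z, B ((X ^ n) y) z ≠ 0 := by
    by_contra! hcon
    exact hy (hnd _ hcon)
  refine ⟨n, (X ^ n) y, (X ^ n) z, hXn y, hHn y, hXn z, hHn z, ?_⟩
  obtain ⟨c, hc, hcz⟩ := sl2_e_pow_f_pow hY hXY (hXn z) (hHn z) n le_rfl
  have hs : ((-1 : A)) ^ n ≠ 0 := pow_ne_zero _ (by simp)
  rw [sl2_skew_pow sX, hcz]
  rw [sl2_skew_pow sX] at hz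
  have : B y (c • (Y ^ (n - n)) ((X ^ n) z)) = c * B y ((X ^ n) z) := by
    rw [Nat.sub_self, pow_zero, Module.End.one_apply]
    exact (sl2Form h0 y).map_smul c _
  rw [this]
  exact mul_ne_zero hs (mul_ne_zero hc (mul_ne_zero_iff.1 hz).2)

/-- Two strings through highest weight vectors of weight `n` pair only in opposite weights. -/
theorem sl2_gram [CharZero A] (h : IsSl2Herm A 1 E B H X Y) {n : ℕ} {w w' : E}
    (hw : H w = (n : A) • w)
    (hw' : H w' = (n : A) • w') (k l : ℕ) :
    B ((Y ^ k) w) ((Y ^ l) w') = if k + l = n then (-1) ^ k * B w ((Y ^ n) w') else 0 := by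
  have h0 := h
  obtain ⟨-, -, hs, -, hnd, hX, hY, hXY, sH, sX, sY⟩ := h
  rw [sl2_skew_pow sY, ← Module.End.mul_apply, ← pow_add]
  split_ifs with hkl
  · rw [hkl]
  · have h1 := sH w ((Y ^ (k + l)) w')
    have h2 : B w (((n : A) - 2 * (k + l : ℕ)) • (Y ^ (k + l)) w')
        = ((n : A) - 2 * (k + l : ℕ)) * B w ((Y ^ (k + l)) w') :=
      (sl2Form h0 w).map_smul _ _
    rw [sl2_h_f_pow hY hw', hw, hs, h2, ← add_mul] at h1
    have h3 : (n : A) + (n - 2 * (k + l : ℕ)) ≠ 0 := by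
      intro h4
      apply hkl
      have : ((k + l : ℕ) : A) = n := by linear_combination (-1 / 2 : A) * h4
      exact Nat.cast_injective this
    rw [(mul_eq_zero.1 h1).resolve_left h3, mul_zero]

/-- Highest weight vectors of weight `n` with non-degenerate Gram matrix generate a
non-degenerate submodule, so in a simple module their strings form a basis. -/
theorem sl2_basis [CharZero A] [Module.Finite A E]
    (h : IsSimpleSl2Herm A 1 E B H X Y)
    {ι : Type} [Fintype ι] [Nonempty ι] {n : ℕ} (w : ι → E) (hXw : ∀ i, X (w i) = 0)
    (hw : ∀ i, H (w i) = (n : A) • w i)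
    (hG : ∀ c : ι → A, (∀ j, ∑ i, c i * B (w i) ((Y ^ n) (w j)) = 0) → c = 0) :
    ∃ b : Module.Basis (ι × Fin (n + 1)) A E, ∀ p, b p = (Y ^ (p.2 : ℕ)) (w p.1) := by
  obtain ⟨h0, hnt, hsimp⟩ := h
  have h := h0
  obtain ⟨-, -, hs, -, hnd, hX, hY, hXY, sH, sX, sY⟩ := h
  set v : ι × Fin (n + 1) → E := fun p => (Y ^ (p.2 : ℕ)) (w p.1) with hv
  have key : ∀ a : ι × Fin (n + 1) → A, (∀ q, B (∑ p, a p • v p) (v q) = 0) → a = 0 := by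
    intro a ha
    have h1 : ∀ q, B (∑ p, a p • v p) (v q) = ∑ p, a p * B (v p) (v q) := by
      intro q
      change sl2Form h0 (∑ p, a p • v p) (v q) = ∑ p, a p * sl2Form h0 (v p) (v q)
      simp
    have h2 : ∀ (l : Fin (n + 1)), (fun i => a (i, l)) = 0 := by
      intro l
      apply hG
      intro j
      have h3 := ha (j, l.rev)
      rw [h1, Fintype.sum_prod_type] at h3
      have h4 : ∀ i, ∑ k, a (i, k) * B (v (i, k)) (v (j, l.rev))
          = (-1) ^ (l : ℕ) * (a (i, l) * B (w i) ((Y ^ n) (w j))) := by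
        intro i
        rw [Finset.sum_eq_single l]
        · simp only [hv]
          rw [sl2_gram h0 (hw i) (hw j), if_pos (by rw [Fin.val_rev]; omega)]
          ring
        · intro k _ hk
          simp only [hv]
          rw [sl2_gram h0 (hw i) (hw j), if_neg, mul_zero]
          rw [Fin.val_rev]
          intro h5
          exact hk (Fin.ext (by omega))
        · simp
      simp only [h4] at h3
      rw [← Finset.mul_sum] at h3
      exact (mul_eq_zero.1 h3).resolve_left (pow_ne_zero _ (by simp))
    funext p
    exact congrFun (h2 p.2) p.1
  have hli : LinearIndependent A v := by
    rw [Fintype.linearIndependent_iff]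
    intro a ha p
    rw [key a (fun q => ?_)]
    · rfl
    · rw [ha]
      exact LinearMap.map_zero₂ (sl2Form h0) (v q)
  set N := Submodule.span A (Set.range v) with hN
  have hmem : ∀ i (k : ℕ), (Y ^ k) (w i) ∈ N := by
    intro i k
    by_cases hk : k < n + 1
    · exact Submodule.subset_span ⟨(i, ⟨k, hk⟩), rfl⟩
    · rw [sl2_f_pow_eq_zero hY hXY (hXw i) (hw i) (by omega)]
      exact N.zero_mem
  have hstab : ∀ T : Module.End A E, (∀ p, T (v p) ∈ N) → ∀ u ∈ N, T u ∈ N := by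
    intro T hT
    have : N ≤ N.comap T := by
      rw [hN, Submodule.span_le]
      rintro _ ⟨p, rfl⟩
      exact hT p
    exact this
  have hdi := hsimp N (hstab H ?_) (hstab X ?_) (hstab Y ?_) ?_
  · have htop : N = ⊤ := by
      refine hdi.resolve_left fun hbot => ?_
      obtain ⟨i⟩ := ‹Nonempty ι›
      have : v (i, 0) ∈ N := Submodule.subset_span ⟨_, rfl⟩
      rw [hbot, Submodule.mem_bot] at this
      exact hli.ne_zero _ this
    exact ⟨Module.Basis.mk hli htop.ge, fun p => by simp [hv]⟩
  · intro p
    simp only [hv]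
    rw [sl2_h_f_pow hY (hw _)]
    exact N.smul_mem _ (hmem _ _)
  · intro p
    simp only [hv]
    rw [sl2_e_f_pow hY hXY (hXw _) (hw _)]
    exact N.smul_mem _ (hmem _ _)
  · intro p
    simp only [hv]
    rw [← Module.End.mul_apply, ← pow_succ']
    exact hmem _ _
  · intro u hu hperp
    obtain ⟨a, rfl⟩ := (Submodule.mem_span_range_iff_exists_fun A).1 hu
    rw [key a fun q => hperp _ (Submodule.subset_span ⟨q, rfl⟩)]
    simp

/-! ### Simple modules of even rank -/

/-- The standard alternating form on a plane. -/
def sl2J (A : Type) [Field A] : Matrix (Fin 2) (Fin 2) A := !![0, 1; -1, 0]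

/-- A basis exhibiting `E` as the tensor product of the irreducible module of highest weight `n`
with a symplectic plane. The vectors `v i k` are indexed by all `k : ℕ`, vanishing for `n < k`,
so that the formulas for the operators need no case distinctions. -/
def IsSl2Std (n : ℕ) (B : E → E → A) (H X Y : Module.End A E)
    (b : Module.Basis (Fin 2 × Fin (n + 1)) A E) (v : Fin 2 → ℕ → E) : Prop :=
  (∀ p, b p = v p.1 p.2) ∧ (∀ i k, n < k → v i k = 0) ∧
  (∀ i k, H (v i k) = ((n : A) - 2 * k) • v i k) ∧
  (∀ i k, X (v i k) = ((k : A) * (n - k + 1)) • v i (k - 1)) ∧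
  (∀ i k, Y (v i k) = v i (k + 1)) ∧
  (∀ i k j l, B (v i k) (v j l) = if k + l = n then (-1) ^ k * sl2J A i j else 0)

theorem sl2_simple_std [CharZero A] [Module.Finite A E] (h : IsSimpleSl2Herm A 1 E B H X Y)
    (hev : Even (Module.finrank A E)) :
    ∃ n, Odd n ∧ Module.finrank A E = 2 * (n + 1) ∧ ∃ b v, IsSl2Std n B H X Y b v := by
  have hnt := h.2.1
  have h0 := h.1
  have h1 := h.1
  obtain ⟨-, -, hs, hsymm, hnd, hX, hY, hXY, sH, sX, sY⟩ := h1
  obtain ⟨n, w, w', hXw, hw, hXw', hw', hne⟩ := sl2_exists_pair h0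
  have hswap : ∀ u v, B u ((Y ^ n) v) = (-1) ^ n * B v ((Y ^ n) u) := by
    intro u v
    rw [hsymm, one_mul, sl2_skew_pow sY]
  have halt : ∀ u, X u = 0 → H u = (n : A) • u → B u ((Y ^ n) u) = 0 := by
    intro u hXu hu
    by_contra hun
    have hn : Even n := by
      by_contra hodd
      have h2 := hswap u u
      rw [(Nat.not_even_iff_odd.1 hodd).neg_one_pow] at h2
      apply hun
      linear_combination (1 / 2 : A) * h2
    obtain ⟨b, -⟩ := sl2_basis h (ι := Unit) (n := n) (fun _ => u) (fun _ => hXu) (fun _ => hu)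
      (by
        intro c hc
        have := hc ()
        simp only [Finset.univ_unique, Finset.sum_singleton] at this
        funext i
        exact (mul_eq_zero.1 this).resolve_right hun)
    rw [Module.finrank_eq_card_basis b] at hev
    simp only [Fintype.card_prod, Fintype.card_unit, Fintype.card_fin, one_mul] at hev
    exact (Nat.not_even_iff_odd.2 hn.add_one) hev
  -- Rescale the second vector so that the pairing equals `1`.
  set t := B w ((Y ^ n) w') with ht
  set w₁ := t⁻¹ • w' with hw₁
  have hXw₁ : X w₁ = 0 := by rw [hw₁, map_smul, hXw', smul_zero]
  have hHw₁ : H w₁ = (n : A) • w₁ := by rw [hw₁, map_smul, hw', smul_comm]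
  have h01 : B w ((Y ^ n) w₁) = 1 := by
    rw [hw₁, map_smul]
    have : B w (t⁻¹ • (Y ^ n) w') = t⁻¹ * t := (sl2Form h0 w).map_smul _ _
    rw [this, inv_mul_cancel₀ hne]
  have h10 : B w₁ ((Y ^ n) w) = -1 := by
    have h2 := halt (w + w₁) (by rw [map_add, hXw, hXw₁, add_zero])
      (by rw [map_add, hw, hHw₁, smul_add])
    rw [map_add, h0.1, h0.2.1, h0.2.1, halt w hXw hw, halt w₁ hXw₁ hHw₁, h01] at h2
    linear_combination h2
  have hn : Odd n := by
    by_contra hodd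
    have h2 := hswap w w₁
    rw [(Nat.not_odd_iff_even.1 hodd).neg_one_pow, h01, h10] at h2
    norm_num at h2
  have hJ : ∀ i j : Fin 2, B (![w, w₁] i) ((Y ^ n) (![w, w₁] j)) = sl2J A i j := by
    intro i j
    fin_cases i <;> fin_cases j <;> simp [sl2J, h01, h10, halt w hXw hw, halt w₁ hXw₁ hHw₁]
  have hXi : ∀ i : Fin 2, X (![w, w₁] i) = 0 := by
    intro i; fin_cases i <;> simp [hXw, hXw₁]
  have hHi : ∀ i : Fin 2, H (![w, w₁] i) = (n : A) • ![w, w₁] i := by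
    intro i; fin_cases i <;> simp [hw, hHw₁]
  obtain ⟨b, hb⟩ := sl2_basis h (n := n) ![w, w₁] hXi hHi (by
    intro c hc
    simp only [hJ, Fin.sum_univ_two] at hc
    have c0 := hc 0
    have c1 := hc 1
    simp only [sl2J, Matrix.of_apply, Matrix.cons_val', Matrix.cons_val_zero, Matrix.cons_val_one,
      Matrix.cons_val_fin_one, mul_zero, mul_one, mul_neg, zero_add, add_zero, neg_eq_zero] at c0 c1
    funext i
    fin_cases i
    · exact c1
    · exact c0)
  refine ⟨n, hn, ?_, b, fun i k => (Y ^ k) (![w, w₁] i), hb, ?_, ?_, ?_, ?_, ?_⟩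
  · rw [Module.finrank_eq_card_basis b]; simp
  · intro i k hk
    exact sl2_f_pow_eq_zero hY hXY (hXi i) (hHi i) hk
  · intro i k
    exact sl2_h_f_pow hY (hHi i) k
  · intro i k
    exact sl2_e_f_pow hY hXY (hXi i) (hHi i) k
  · intro i k
    rw [← Module.End.mul_apply, ← pow_succ']
  · intro i k j l
    change B ((Y ^ k) _) ((Y ^ l) _) = _
    rw [sl2_gram h0 (hHi i) (hHi j), hJ]

/-- A standard module is simple: by `sl2_exists_pair` a nonzero non-degenerate stable submodule
contains two highest weight vectors with nonzero pairing. These lie in the plane spanned by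
`v 0 0` and `v 1 0`, and since the pairing is alternating there they span it. -/
theorem sl2_std_simple [CharZero A] [Module.Finite A E] (h : IsSl2Herm A 1 E B H X Y) {n : ℕ}
    {b : Module.Basis (Fin 2 × Fin (n + 1)) A E} {v : Fin 2 → ℕ → E}
    (hstd : IsSl2Std n B H X Y b v) : IsSimpleSl2Herm A 1 E B H X Y := by
  have h1 := h
  obtain ⟨hadd, hadd', hs, hsymm, hnd, hX, hY, hXY, sH, sX, sY⟩ := h1
  obtain ⟨hb, hv0, hvH, hvX, hvY, hvB⟩ := hstd
  refine ⟨h, ⟨b (0, 0), 0, b.ne_zero _⟩, ?_⟩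
  intro N NH NX NY Nnd
  rw [or_iff_not_imp_left]
  intro hbot
  have : Nontrivial N := Submodule.nontrivial_iff_ne_bot.2 hbot
  have hN : IsSl2Herm A 1 N (fun u v => B u v) (H.restrict NH) (X.restrict NX)
      (Y.restrict NY) := by
    refine ⟨fun u u' v => hadd u u' v, fun u v v' => hadd' u v v', fun a u v => hs a u v,
      fun u v => hsymm u v, ?_, ?_, ?_, ?_, fun u v => sH u v, fun u v => sX u v,
      fun u v => sY u v⟩
    · intro u hu
      exact Subtype.ext (Nnd u u.2 fun v hv => hu ⟨v, hv⟩)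
    · ext u
      exact congrArg (fun T : Module.End A E => T u) hX
    · ext u
      exact congrArg (fun T : Module.End A E => T u) hY
    · ext u
      exact congrArg (fun T : Module.End A E => T u) hXY
  obtain ⟨m, w, w', hXw, hw, hXw', hw', hne⟩ := sl2_exists_pair hN
  have hXw : X w = 0 := congrArg Subtype.val hXw
  have hw : H w = (m : A) • (w : E) := congrArg Subtype.val hw
  have hXw' : X w' = 0 := congrArg Subtype.val hXw'
  have hYpow : ∀ (k : ℕ) (u : N), (((Y.restrict NY) ^ k) u : E) = (Y ^ k) u := by
    intro k
    induction k with
    | zero => simp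
    | succ k ih =>
      intro u
      rw [pow_succ', Module.End.mul_apply, pow_succ', Module.End.mul_apply, ← ih]
      rfl
  replace hne : B w ((Y ^ m) w') ≠ 0 := by rw [← hYpow]; exact hne
  -- The kernel of `e` is orthogonal to the image of `e`, which contains `v j l` for `l < n`.
  have hker : ∀ u, X u = 0 → ∃ p q : A, u = p • v 0 0 + q • v 1 0 := by
    intro u hu
    refine ⟨B u (v 1 n), - B u (v 0 n), ?_⟩
    rw [← sub_eq_zero]
    have hlow : ∀ j l, l < n → B u (v j l) = 0 := by
      intro j l hl
      have h2 := sX u (v j (l + 1))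
      rw [hu, hvX] at h2
      have h3 : B u ((((l + 1 : ℕ) : A) * (n - (l + 1 : ℕ) + 1)) • v j (l + 1 - 1))
        = (((l + 1 : ℕ) : A) * (n - (l + 1 : ℕ) + 1)) * B u (v j (l + 1 - 1)) :=
        (sl2Form h u).map_smul _ _
      have h4 : B 0 (v j (l + 1)) = 0 := LinearMap.map_zero₂ (sl2Form h) _
      rw [h3, h4, zero_add, Nat.add_sub_cancel] at h2
      refine (mul_eq_zero.1 h2).resolve_left (mul_ne_zero (Nat.cast_ne_zero.2 (by omega)) ?_)
      have : (n : A) - (l + 1 : ℕ) + 1 = ((n - l : ℕ) : A) := by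
        rw [Nat.cast_sub hl.le]; push_cast; ring
      rw [this]
      exact Nat.cast_ne_zero.2 (by omega)
    apply hnd
    have hz : (sl2Form h) (u - (B u (v 1 n) • v 0 0 + -B u (v 0 n) • v 1 0)) = 0 := by
      apply b.ext
      rintro ⟨j, l⟩
      rw [hb]
      simp only [map_sub, map_add, map_smul, LinearMap.sub_apply, LinearMap.add_apply,
        LinearMap.smul_apply, LinearMap.zero_apply, smul_eq_mul]
      change B u (v j l) - (B u (v 1 n) * B (v 0 0) (v j l) + -B u (v 0 n) * B (v 1 0) (v j l)) = 0
      rw [hvB, hvB]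
      by_cases hl : (l : ℕ) = n
      · rw [hl]
        fin_cases j <;> simp [sl2J]
      · rw [hlow j l (by omega), if_neg (by omega), if_neg (by omega)]
        ring
    intro y
    exact congrArg (fun T : E →ₗ[A] A => T y) hz
  obtain ⟨p, q, hpq⟩ := hker w hXw
  obtain ⟨p', q', hpq'⟩ := hker w' hXw'
  have hvpow : ∀ i k, (Y ^ k) (v i 0) = v i k := by
    intro i k
    induction k with
    | zero => simp
    | succ k ih => rw [pow_succ', Module.End.mul_apply, ih, hvY]
  have hHn : H w = (n : A) • (w : E) := by
    rw [hpq]; simp only [map_add, map_smul, hvH]; push_cast; module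
  have hmn : m = n := by
    have hw0 : (w : E) ≠ 0 := by
      intro h3
      rw [h3] at hne
      exact hne (LinearMap.map_zero₂ (sl2Form h) _)
    rw [hw] at hHn
    exact Nat.cast_injective (smul_left_injective A hw0 hHn)
  subst hmn
  have hdet : p * q' - q * p' ≠ 0 := by
    have h3 : B w ((Y ^ m) w') = p * q' - q * p' := by
      change sl2Form h w ((Y ^ m) w') = _
      rw [hpq, hpq']
      simp only [map_add, map_smul, hvpow, LinearMap.add_apply, LinearMap.smul_apply, smul_eq_mul]
      have h4 : ∀ i j, sl2Form h (v i 0) (v j m) = sl2J A i j := by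
        intro i j
        change B _ _ = _
        rw [hvB, if_pos (by omega)]; simp
      simp only [h4, sl2J, Matrix.of_apply, Matrix.cons_val', Matrix.cons_val_zero,
        Matrix.cons_val_one, Matrix.cons_val_fin_one]
      ring
    rwa [h3] at hne
  have hv00 : v 0 0 ∈ N := by
    have : q' • (w : E) - q • (w' : E) ∈ N := N.sub_mem (N.smul_mem _ w.2) (N.smul_mem _ w'.2)
    rw [show q' • (w : E) - q • (w' : E) = (p * q' - q * p') • v 0 0 by
      rw [hpq, hpq']; module] at this
    exact (N.smul_mem_iff hdet).1 this
  have hv10 : v 1 0 ∈ N := by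
    have : p • (w' : E) - p' • (w : E) ∈ N := N.sub_mem (N.smul_mem _ w'.2) (N.smul_mem _ w.2)
    rw [show p • (w' : E) - p' • (w : E) = (p * q' - q * p') • v 1 0 by
      rw [hpq, hpq']; module] at this
    exact (N.smul_mem_iff hdet).1 this
  have hall : ∀ i k, v i k ∈ N := by
    intro i k
    induction k with
    | zero => fin_cases i; exacts [hv00, hv10]
    | succ k ih => rw [← hvY]; exact NY _ ih
  rw [eq_top_iff, ← b.span_eq, Submodule.span_le]
  rintro _ ⟨x, rfl⟩
  rw [hb]
  exact hall _ _

theorem sl2_std_iso {E' : Type} [AddCommGroup E'] [Module A E'] {B' : E' → E' → A}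
    {H' X' Y' : Module.End A E'} {n : ℕ}
    {b : Module.Basis (Fin 2 × Fin (n + 1)) A E} {v : Fin 2 → ℕ → E}
    {b' : Module.Basis (Fin 2 × Fin (n + 1)) A E'} {v' : Fin 2 → ℕ → E'}
    (h : IsSl2Herm A 1 E B H X Y) (h' : IsSl2Herm A 1 E' B' H' X' Y')
    (hstd : IsSl2Std n B H X Y b v) (hstd' : IsSl2Std n B' H' X' Y' b' v') :
    Sl2HermIso A E E' B H X Y B' H' X' Y' := by
  obtain ⟨hb, hv0, hvH, hvX, hvY, hvB⟩ := hstd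
  obtain ⟨hb', hv0', hvH', hvX', hvY', hvB'⟩ := hstd'
  let φ := b.equiv b' (Equiv.refl _)
  have hφ : ∀ i k, φ (v i k) = v' i k := by
    intro i k
    by_cases hk : k < n + 1
    · have := b.equiv_apply (i, ⟨k, hk⟩) b' (Equiv.refl _)
      rwa [hb, Equiv.refl_apply, hb'] at this
    · rw [hv0 i k (by omega), hv0' i k (by omega), map_zero]
  refine ⟨φ, ?_, ?_, ?_, ?_⟩
  · have : (sl2Form h').compl₁₂ φ.toLinearMap φ.toLinearMap = sl2Form h := by
      refine b.ext fun p => b.ext fun q => ?_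
      rw [hb, hb]
      simp only [LinearMap.compl₁₂_apply, LinearEquiv.coe_coe, hφ]
      change B' _ _ = B _ _
      rw [hvB, hvB']
    intro u v
    exact congrArg (fun T : E →ₗ[A] E →ₗ[A] A => T u v) this
  · have : φ.toLinearMap ∘ₗ H = H' ∘ₗ φ.toLinearMap := b.ext fun p => by
      simp [hb, hvH, hvH', hφ]
    exact fun u => congrArg (fun T : E →ₗ[A] E' => T u) this
  · have : φ.toLinearMap ∘ₗ X = X' ∘ₗ φ.toLinearMap := b.ext fun p => by
      simp [hb, hvX, hvX', hφ]
    exact fun u => congrArg (fun T : E →ₗ[A] E' => T u) this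
  · have : φ.toLinearMap ∘ₗ Y = Y' ∘ₗ φ.toLinearMap := b.ext fun p => by
      simp [hb, hvY, hvY', hφ]
    exact fun u => congrArg (fun T : E →ₗ[A] E' => T u) this

/-! ### Existence -/

/-- For odd `n`, any basis of the right size supports the standard structure: the sign `(-1)^n`
of the invariant form on the irreducible module compensates that of the symplectic plane. -/
theorem sl2_std_exists {n : ℕ} (hn : Odd n) (b : Module.Basis (Fin 2 × Fin (n + 1)) A E) :
    ∃ (B : E → E → A) (H X Y : Module.End A E) (v : Fin 2 → ℕ → E),
      IsSl2Herm A 1 E B H X Y ∧ IsSl2Std n B H X Y b v := by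
  let v : Fin 2 → ℕ → E := fun i k => if hk : k < n + 1 then b (i, ⟨k, hk⟩) else 0
  have hb : ∀ p, b p = v p.1 p.2 := fun p => by simp only [v, p.2.isLt, dif_pos]
  have hv0 : ∀ i k, n < k → v i k = 0 := fun i k hk => dif_neg (by omega)
  let H : Module.End A E := b.constr A fun p => ((n : A) - 2 * (p.2 : ℕ)) • v p.1 p.2
  let X : Module.End A E :=
    b.constr A fun p => (((p.2 : ℕ) : A) * (n - (p.2 : ℕ) + 1)) • v p.1 (p.2 - 1)
  let Y : Module.End A E := b.constr A fun p => v p.1 (p.2 + 1)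
  let β : E →ₗ[A] E →ₗ[A] A := b.constr A fun p => b.constr A fun q =>
    if (p.2 : ℕ) + q.2 = n then (-1) ^ (p.2 : ℕ) * sl2J A p.1 q.1 else 0
  have hvb : ∀ i k (hk : k < n + 1), v i k = b (i, ⟨k, hk⟩) := fun i k hk => dif_pos hk
  have hvH : ∀ i k, H (v i k) = ((n : A) - 2 * k) • v i k := by
    intro i k
    by_cases hk : k < n + 1
    · rw [hvb i k hk, b.constr_basis, ← hvb i k hk]
    · simp [hv0 i k (by omega)]
  have hvX : ∀ i k, X (v i k) = ((k : A) * (n - k + 1)) • v i (k - 1) := by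
    intro i k
    by_cases hk : k < n + 1
    · rw [hvb i k hk, b.constr_basis]
    · rw [hv0 i k (by omega), map_zero]
      by_cases hk' : k = n + 1
      · subst hk'; simp
      · rw [hv0 i (k - 1) (by omega), smul_zero]
  have hvY : ∀ i k, Y (v i k) = v i (k + 1) := by
    intro i k
    by_cases hk : k < n + 1
    · rw [hvb i k hk, b.constr_basis]
    · rw [hv0 i k (by omega), map_zero, hv0 i (k + 1) (by omega)]
  have hvB : ∀ i k j l, β (v i k) (v j l) = if k + l = n then (-1) ^ k * sl2J A i j else 0 := by
    intro i k j l
    by_cases hk : k < n + 1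
    · by_cases hl : l < n + 1
      · rw [hvb i k hk, hvb j l hl, b.constr_basis, b.constr_basis]
      · rw [hv0 j l (by omega), map_zero, if_neg (by omega)]
    · rw [hv0 i k (by omega), map_zero, if_neg (by omega), LinearMap.zero_apply]
  have hskew : ∀ T : Module.End A E,
      (∀ i k j l, β (T (v i k)) (v j l) + β (v i k) (T (v j l)) = 0) →
      ∀ u w, β (T u) w + β u (T w) = 0 := by
    intro T hT
    have : β ∘ₗ T + β.compl₂ T = 0 := by
      refine b.ext fun p => b.ext fun q => ?_
      simpa [hb] using hT p.1 p.2 q.1 q.2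
    exact fun u w => congrArg (fun S : E →ₗ[A] E →ₗ[A] A => S u w) this
  have hJ : ∀ i j, sl2J A i j = - sl2J A j i := by
    intro i j; fin_cases i <;> fin_cases j <;> simp [sl2J]
  refine ⟨fun u w => β u w, H, X, Y, v, ⟨?_, ?_, ?_, ?_, ?_, ?_, ?_, ?_, ?_, ?_, ?_⟩,
    hb, hv0, hvH, hvX, hvY, hvB⟩
  · intro u u' w; simp
  · intro u u' w; simp
  · intro a u w; simp
  · have : β = β.flip := by
      refine b.ext fun p => b.ext fun q => ?_
      rw [hb, hb, LinearMap.flip_apply, hvB, hvB, hJ, add_comm (q.2 : ℕ)]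
      split_ifs with hpq
      · have h1 : ((-1 : A)) ^ (p.2 : ℕ) * (-1) ^ (q.2 : ℕ) = -1 := by
          rw [← pow_add, hpq, hn.neg_one_pow]
        have h2 : ((-1 : A)) ^ (q.2 : ℕ) * (-1) ^ (q.2 : ℕ) = 1 := by
          rw [← mul_pow]; simp
        linear_combination (-(-1) ^ (q.2 : ℕ) * sl2J A q.1 p.1) * h1
          + ((-1) ^ (p.2 : ℕ) * sl2J A q.1 p.1) * h2
      · rfl
    intro u w
    rw [one_mul]
    exact congrArg (fun S : E →ₗ[A] E →ₗ[A] A => S u w) this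
  · intro u hu
    have hexp := b.sum_repr u
    have hcoef : ∀ p, b.repr u p = 0 := by
      rintro ⟨i, k⟩
      -- Pairing with the opposite vector isolates a single coordinate.
      have h1 : ∀ j, β u (v j (n - k)) =
          (-1) ^ (k : ℕ) * ∑ i, b.repr u (i, k) * sl2J A i j := by
        intro j
        conv_lhs => rw [← hexp]
        simp only [map_sum, map_smul, LinearMap.sum_apply, LinearMap.smul_apply, hb, hvB,
          smul_eq_mul]
        rw [Fintype.sum_prod_type, Finset.mul_sum]
        refine Finset.sum_congr rfl fun i _ => ?_
        rw [Finset.sum_eq_single k]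
        · rw [if_pos (by dsimp only; omega)]; ring
        · intro l _ hl
          rw [if_neg, mul_zero]
          dsimp only
          intro h5
          exact hl (Fin.ext (by omega))
        · simp
      have h2 : ∀ j, ∑ i, b.repr u (i, k) * sl2J A i j = 0 := fun j =>
        (mul_eq_zero.1 ((h1 j).symm.trans (hu _))).resolve_left (pow_ne_zero _ (by simp))
      have c0 := h2 0
      have c1 := h2 1
      simp only [Fin.sum_univ_two, sl2J, Matrix.of_apply, Matrix.cons_val', Matrix.cons_val_zero,
        Matrix.cons_val_one, Matrix.cons_val_fin_one, mul_zero, mul_one, mul_neg, zero_add,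
        add_zero, neg_eq_zero] at c0 c1
      fin_cases i
      · exact c1
      · exact c0
    rw [← hexp]
    simp [hcoef]
  · refine b.ext fun p => ?_
    rw [hb]
    obtain ⟨i, k, hk⟩ := p
    simp only [LinearMap.sub_apply, Module.End.mul_apply, LinearMap.smul_apply, hvX, hvH, map_smul]
    rcases k with _ | k
    · simp
    · simp only [Nat.add_sub_cancel]; push_cast; module
  · refine b.ext fun p => ?_
    rw [hb]
    obtain ⟨i, k, hk⟩ := p
    simp only [LinearMap.sub_apply, Module.End.mul_apply, LinearMap.smul_apply, hvY, hvH, map_smul]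
    push_cast; module
  · refine b.ext fun p => ?_
    rw [hb]
    obtain ⟨i, k, hk⟩ := p
    simp only [LinearMap.sub_apply, Module.End.mul_apply, hvX, hvY, hvH, map_smul]
    rcases k with _ | k
    · simp
    · simp only [Nat.add_sub_cancel]; push_cast; module
  · refine hskew H fun i k j l => ?_
    simp only [hvH, map_smul, LinearMap.smul_apply, hvB, smul_eq_mul]
    split_ifs with hkl
    · subst hkl; push_cast; ring
    · ring
  · refine hskew X fun i k j l => ?_
    simp only [hvX, map_smul, LinearMap.smul_apply, hvB, smul_eq_mul]
    rcases k with _ | k <;> rcases l with _ | l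
    · simp
    · simp only [Nat.cast_zero, zero_mul, zero_add, Nat.add_sub_cancel]
      split_ifs with hl
      · subst hl; push_cast; ring
      · ring
    · simp only [Nat.cast_zero, zero_mul, add_zero, Nat.add_sub_cancel]
      split_ifs with hl
      · subst hl; push_cast; ring
      · ring
    · simp only [Nat.add_sub_cancel]
      by_cases hkl : k + l + 1 = n
      · rw [if_pos (by omega), if_pos (by omega)]
        subst hkl; push_cast; ring
      · rw [if_neg (by omega), if_neg (by omega)]; ring
  · refine hskew Y fun i k j l => ?_
    simp only [hvY, hvB]
    by_cases hkl : k + l + 1 = n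
    · rw [if_pos (by omega), if_pos (by omega)]; ring
    · rw [if_neg (by omega), if_neg (by omega)]; ring

end Ops

/-- Orthogonal case (`A = A⁺` a field, trivial involution, `ε = 1`): for every positive
integer `d` there is, up to isomorphism, a unique simple `1`-Hermitian `(sl₂, A)`-module
of rank `4d`, and there is no simple `1`-Hermitian `(sl₂, A)`-module of rank `4d - 2`. -/
theorem simple_sl2_hermitian_orthogonal (A : Type) [Field A] [CharZero A]
    (d : ℕ) (hd : 0 < d) :
    -- existence in rank 4d
    (∃ (B : (Fin (4 * d) → A) → (Fin (4 * d) → A) → A)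
       (H Eop Fop : Module.End A (Fin (4 * d) → A)),
        IsSimpleSl2Herm A 1 (Fin (4 * d) → A) B H Eop Fop) ∧
    -- uniqueness in rank 4d
    (∀ (E₁ : Type) [AddCommGroup E₁] [Module A E₁] [Module.Finite A E₁]
       (E₂ : Type) [AddCommGroup E₂] [Module A E₂] [Module.Finite A E₂]
       (B₁ : E₁ → E₁ → A) (H₁ E₁op F₁op : Module.End A E₁)
       (B₂ : E₂ → E₂ → A) (H₂ E₂op F₂op : Module.End A E₂),
        IsSimpleSl2Herm A 1 E₁ B₁ H₁ E₁op F₁op → Module.finrank A E₁ = 4 * d →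
        IsSimpleSl2Herm A 1 E₂ B₂ H₂ E₂op F₂op → Module.finrank A E₂ = 4 * d →
        Sl2HermIso A E₁ E₂ B₁ H₁ E₁op F₁op B₂ H₂ E₂op F₂op) ∧
    -- non-existence in rank 4d - 2
    (∀ (E : Type) [AddCommGroup E] [Module A E] [Module.Finite A E]
       (B : E → E → A) (H Eop Fop : Module.End A E),
        IsSimpleSl2Herm A 1 E B H Eop Fop → Module.finrank A E ≠ 4 * d - 2) := by
  refine ⟨?_, ?_, ?_⟩
  · let e : Fin (4 * d) ≃ Fin 2 × Fin (2 * d - 1 + 1) :=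
      (finCongr (by omega)).trans finProdFinEquiv.symm
    obtain ⟨B, H, X, Y, v, h, hstd⟩ := sl2_std_exists (n := 2 * d - 1) ⟨d - 1, by omega⟩
      ((Pi.basisFun A (Fin (4 * d))).reindex e)
    exact ⟨B, H, X, Y, sl2_std_simple h hstd⟩
  · intro E₁ _ _ _ E₂ _ _ _ B₁ H₁ E₁op F₁op B₂ H₂ E₂op F₂op h₁ r₁ h₂ r₂
    obtain ⟨n, -, hn, b, v, hs⟩ := sl2_simple_std h₁ ⟨2 * d, by omega⟩
    obtain ⟨n', -, hn', b', v', hs'⟩ := sl2_simple_std h₂ ⟨2 * d, by omega⟩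
    obtain rfl : n = n' := by omega
    exact sl2_std_iso h₁.1 h₂.1 hs hs'
  · intro E _ _ _ B H Eop Fop h r
    obtain ⟨n, ⟨m, hm⟩, hn, -⟩ := sl2_simple_std h ⟨2 * d - 1, by omega⟩
    omega
end

section
/- For every x ∈ U(E) there exists an element (g, -1) in the MVW-extension Ŭ(E) (i.e., g is a k-linear automorphism of E with ⟨gu, gv⟩ = ⟨v, u⟩ for all u, v) such that g x g⁻¹ = x⁻¹. -/
/-!
An automorphism `x` that preserves the form makes `E` a module over `R = A[T;T⁻¹]`, with `T` acting
as `x`. Let `σ` be the involution of `R` extending `τ` with `T ↦ T⁻¹`. Since `A` is commutative,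
semisimple and finite-dimensional in characteristic zero, its trace form is non-degenerate, so
`b = tr_{A/k} ∘ B` is a non-degenerate `±1`-symmetric `k`-bilinear form for which the adjoint of
`r : R` is `σ r` (`IsAdjForm`). A `σ`-semilinear `g` with `b (g u) (g v) = b v u` then satisfies
`B (g u) (g v) = B v u` and `g x = x⁻¹ g`, so it suffices to find such a `g`. Moreover `A` is a
finite product of fields, so `R` is a principal ideal ring, and nothing else about `R` is needed.

A non-degenerate submodule splits off orthogonally, so one may assume that `E` has no proper nonzero
non-degenerate submodule, and, replacing `R` by `R ⧸ Ann E`, that `R` acts faithfully and is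
Artinian (`IsAdjForm.exists_conj`, `IsAdjForm.exists_of_indecomposable'`). By Fitting's lemma, every
`σ`-fixed element of `R` is nilpotent or a unit. Hence if `(p)` is a maximal ideal, then `p * σ p`
is nilpotent, and it follows that there is `s ≠ 0` with `p * s = 0`, and that every nonzero element
of `R` divides `s` or `σ s` for each such `s`. Two cases remain
(`IsAdjForm.exists_of_indecomposable`).

* If `b (s e) e ≠ 0` for some such `s` and some `e`, then no nonzero element of `R e` is orthogonal
  to `R e`. So `E = R e`, and `g (r e) = σ r e` works.
* Otherwise every `(u, v) ↦ b (s u) v` is alternating. This forces `σ s = -ε s`, so every nonzero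
  element of `R` divides `s`. If `b (s u) v ≠ 0`, then `R u + R v` is free and non-degenerate, hence
  equal to `E`. The functional `t ↦ b (t u) v` generates the dual of `R`, so
  `b (t v) u = b (t η u) v` for some `η : R`, and `η * σ η = 1`. Then `η u, v` has the transposed
  Gram matrix of `u, v`, and `g (r u + r' v) = σ r η u + σ r' v` works.
-/

/-- `B` is an `ε`-Hermitian form on the `A`-module `E`, with respect to the involution
`τ` of `A`: it is biadditive, `A`-linear in the first variable, `(ε, τ)`-Hermitian
symmetric, and non-degenerate. -/
def IsHermForm (A : Type) [CommRing A] (τ : A → A) (ε : A)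
    (E : Type) [AddCommGroup E] [Module A E] (B : E → E → A) : Prop :=
  (∀ u u' v, B (u + u') v = B u v + B u' v) ∧
  (∀ u v v', B u (v + v') = B u v + B u v') ∧
  (∀ (a : A) (u v : E), B (a • u) v = a * B u v) ∧
  (∀ u v, B u v = ε * τ (B v u)) ∧
  (∀ u, (∀ v, B u v = 0) → u = 0)

/-- The `ε`-Hermitian `A`-module `(E, B)` is simple: it is nonzero and every
non-degenerate `A`-submodule is `⊥` or `⊤`. -/
def IsSimpleHerm (A : Type) [CommRing A] (τ : A → A) (ε : A)
    (E : Type) [AddCommGroup E] [Module A E] (B : E → E → A) : Prop :=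
  Nontrivial E ∧
    ∀ N : Submodule A E, (∀ u ∈ N, (∀ v ∈ N, B u v = 0) → u = 0) → N = ⊥ ∨ N = ⊤

/-! ### Forms with adjoint involution -/

/-- A non-degenerate `ε`-symmetric `k`-bilinear form `b` on an `R`-module `E` for which the adjoint
of multiplication by `r : R` is multiplication by `σ r`. -/
structure IsAdjForm {k R E : Type} [Field k] [CommRing R] [AddCommGroup E] [Module k E]
    [Module R E] (σ : R →+* R) (ε : k) (b : E →ₗ[k] E →ₗ[k] k) : Prop where
  adj : ∀ (r : R) (u v : E), b (r • u) v = b u (σ r • v)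
  symm : ∀ u v : E, b u v = ε * b v u
  nondeg : ∀ u : E, (∀ v, b u v = 0) → u = 0

namespace IsAdjForm

variable {k R E : Type} [Field k] [CommRing R] [AddCommGroup E] [Module k E]
  [Module R E] {σ : R →+* R} {ε : k} {b : E →ₗ[k] E →ₗ[k] k}

lemma ortho_symm (h : IsAdjForm σ ε b) {u v : E} (huv : b u v = 0) : b v u = 0 := by
  rw [h.symm, huv, mul_zero]

lemma adj' (h : IsAdjForm σ ε b) (hσ : ∀ r, σ (σ r) = r) (r : R) (u v : E) :
    b u (r • v) = b (σ r • u) v := by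
  rw [h.adj, hσ]

/-- Fitting's lemma for a `σ`-fixed element of `R`: the image of a high power is a non-degenerate
submodule, so it is `0` or everything when `E` is orthogonally indecomposable. -/
lemma isNilpotent_or_isUnit [IsArtinianRing R] (h : IsAdjForm σ ε b)
    (faith : ∀ r : R, (∀ u : E, r • u = 0) → r = 0)
    (indec : ∀ N : Submodule R E, (∀ u ∈ N, (∀ v ∈ N, b u v = 0) → u = 0) → N = ⊥ ∨ N = ⊤)
    (q : R) (hq : σ q = q) : IsNilpotent q ∨ IsUnit q := by
  obtain ⟨n, c, hc⟩ := IsArtinian.exists_pow_succ_smul_dvd q (1 : R)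
  simp only [smul_eq_mul, mul_one] at hc
  have hpow : ∀ m : ℕ, q ^ n = c ^ m * (q ^ m * q ^ n) := by
    intro m
    induction m with
    | zero => simp
    | succ m ih =>
      calc q ^ n = c ^ m * (q ^ m * q ^ n) := ih
        _ = c ^ m * (q ^ m * (q ^ (n + 1) * c)) := by rw [hc]
        _ = _ := by ring
  have hσq : σ (q ^ n) = q ^ n := by rw [map_pow, hq]
  rcases indec (LinearMap.range (LinearMap.lsmul R E (q ^ n))) (by
    rintro _ ⟨w, rfl⟩ hw
    have h0 : q ^ n • (q ^ n • w) = 0 := by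
      refine h.nondeg _ fun v => ?_
      rw [h.adj, hσq]
      exact hw _ ⟨v, rfl⟩
    change q ^ n • w = 0
    rw [hpow n, mul_smul, mul_smul, h0, smul_zero]) with hN | hN
  · left
    refine ⟨n, faith _ fun u => ?_⟩
    have : q ^ n • u ∈ LinearMap.range (LinearMap.lsmul R E (q ^ n)) := ⟨u, rfl⟩
    rwa [hN, Submodule.mem_bot] at this
  · right
    refine IsUnit.of_mul_eq_one c ?_
    rw [← sub_eq_zero]
    refine faith _ fun u => ?_
    obtain ⟨w, rfl⟩ : u ∈ LinearMap.range (LinearMap.lsmul R E (q ^ n)) := by rw [hN]; trivial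
    change (q * c - 1) • q ^ n • w = 0
    rw [smul_smul]
    have : (q * c - 1) * q ^ n = 0 := by
      rw [Nat.succ_eq_add_one, pow_succ] at hc
      linear_combination hc
    rw [this, zero_smul]

variable [Algebra k R] [IsScalarTower k R E]

/-- If `e₁, e₂` and `f₁, f₂` both generate `E` and the Gram matrix of the `f`'s is the transpose
of the Gram matrix of the `e`'s, then `r₁ e₁ + r₂ e₂ ↦ σ r₁ f₁ + σ r₂ f₂` is a well-defined
anti-isometry. A cyclic module is the case `e₂ = f₂ = 0`. -/
lemma exists_of_gram (h : IsAdjForm σ ε b) (hσ : ∀ r, σ (σ r) = r)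
    (hσk : ∀ c : k, σ (algebraMap k R c) = algebraMap k R c) (e₁ e₂ f₁ f₂ : E)
    (he : ∀ w : E, ∃ r s : R, w = r • e₁ + s • e₂)
    (hf : ∀ w : E, ∃ r s : R, w = r • f₁ + s • f₂)
    (h11 : ∀ t : R, b (t • f₁) f₁ = b (t • e₁) e₁)
    (h12 : ∀ t : R, b (t • f₁) f₂ = b (t • e₂) e₁)
    (h21 : ∀ t : R, b (t • f₂) f₁ = b (t • e₁) e₂)
    (h22 : ∀ t : R, b (t • f₂) f₂ = b (t • e₂) e₂) :
    ∃ g : E ≃ₗ[k] E, (∀ u v, b (g u) (g v) = b v u) ∧ ∀ (r : R) (u : E), g (r • u) = σ r • g u := by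
  have key : ∀ r s r' s' : R, b (σ r • f₁ + σ s • f₂) (σ r' • f₁ + σ s' • f₂)
      = b (r' • e₁ + s' • e₂) (r • e₁ + s • e₂) := by
    intro r s r' s'
    simp only [map_add, LinearMap.add_apply, h.adj' hσ, smul_smul, hσ, h11, h12, h21, h22]
    simp only [mul_comm]
    ring
  choose c d hcd using he
  let g₀ : E → E := fun w => σ (c w) • f₁ + σ (d w) • f₂
  have surj : ∀ z : E, ∃ r s : R, z = σ r • f₁ + σ s • f₂ := by
    intro z
    obtain ⟨r, s, hz⟩ := hf z
    exact ⟨σ r, σ s, by rw [hσ, hσ]; exact hz⟩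
  have g₀_eq : ∀ r s : R, g₀ (r • e₁ + s • e₂) = σ r • f₁ + σ s • f₂ := by
    intro r s
    rw [← sub_eq_zero]
    refine h.nondeg _ fun z => ?_
    obtain ⟨r', s', rfl⟩ := surj z
    rw [map_sub, LinearMap.sub_apply, key, key, ← hcd, sub_self]
  have g₀_form : ∀ u v, b (g₀ u) (g₀ v) = b v u := by
    intro u v
    rw [key, ← hcd, ← hcd]
  have g₀_add : ∀ u v, g₀ (u + v) = g₀ u + g₀ v := by
    intro u v
    have : u + v = (c u + c v) • e₁ + (d u + d v) • e₂ := by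
      conv_lhs => rw [hcd u, hcd v]
      module
    rw [this, g₀_eq, map_add, map_add]
    simp only [g₀]
    module
  have g₀_smul : ∀ (r : R) u, g₀ (r • u) = σ r • g₀ u := by
    intro r u
    have : r • u = (r * c u) • e₁ + (r * d u) • e₂ := by
      conv_lhs => rw [hcd u]
      module
    rw [this, g₀_eq, map_mul, map_mul]
    simp only [g₀]
    module
  let g₁ : E →ₗ[k] E :=
    { toFun := g₀
      map_add' := g₀_add
      map_smul' := fun a u => by
        rw [RingHom.id_apply, ← algebraMap_smul R a u, g₀_smul, hσk, algebraMap_smul] }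
  have inj : Function.Injective g₁ := by
    refine (injective_iff_map_eq_zero g₁).2 fun u hu => ?_
    refine h.nondeg u fun v => ?_
    rw [← g₀_form v u]
    change b (g₁ v) (g₁ u) = 0
    rw [hu, map_zero]
  have sur : Function.Surjective g₁ := by
    intro z
    obtain ⟨r, s, rfl⟩ := surj z
    exact ⟨_, g₀_eq r s⟩
  exact ⟨LinearEquiv.ofBijective g₁ ⟨inj, sur⟩, g₀_form, g₀_smul⟩

end IsAdjForm

/-! ### Divisibility in principal ideal rings -/

/-- In a principal ideal ring, the annihilator of a generator `p` of a maximal ideal has no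
nonzero proper subideal. -/
lemma dvd_of_mul_eq_zero_of_maximal {R : Type} [CommRing R] [IsPrincipalIdealRing R] {p : R}
    (hp : (Ideal.span {p}).IsMaximal) {a a' : R} (ha : a ≠ 0) (hpa : p * a = 0)
    (hpa' : p * a' = 0) : a ∣ a' := by
  obtain ⟨d, hd⟩ := IsPrincipalIdealRing.principal (Ideal.span {a, a'})
  rw [Ideal.submodule_span_eq] at hd
  obtain ⟨x, y, hxy⟩ : ∃ x y, x * a + y * a' = d :=
    Ideal.mem_span_pair.1 (hd ▸ Ideal.mem_span_singleton_self d)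
  obtain ⟨c, hc⟩ : d ∣ a := Ideal.mem_span_singleton.1 (hd ▸ Ideal.subset_span (by simp))
  obtain ⟨c', hc'⟩ : d ∣ a' := Ideal.mem_span_singleton.1 (hd ▸ Ideal.subset_span (by simp))
  have hpd : p * d = 0 := by rw [← hxy]; linear_combination x * hpa + y * hpa'
  by_cases hcm : c ∈ Ideal.span {p}
  · obtain ⟨z, rfl⟩ := Ideal.mem_span_singleton.1 hcm
    exact absurd (by rw [hc]; linear_combination z * hpd) ha
  · obtain ⟨y', i, hi, hy⟩ := hp.exists_inv hcm
    obtain ⟨z, rfl⟩ := Ideal.mem_span_singleton.1 hi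
    refine ⟨c' * y', ?_⟩
    rw [hc', hc]
    linear_combination (-(c' * d)) * hy + c' * z * hpd

/-- If `p * p'` is nilpotent, every nonzero element has a nonzero multiple killed by `p` or by
`p'`. -/
lemma exists_mul_ne_zero_of_isNilpotent {R : Type} [CommRing R] {p p' : R}
    (hq : IsNilpotent (p * p')) {r : R} (hr : r ≠ 0) :
    ∃ t, t * r ≠ 0 ∧ (p * (t * r) = 0 ∨ p' * (t * r) = 0) := by
  classical
  obtain ⟨m, hm⟩ := hq
  have hex : ∃ n, (p * p') ^ n * r = 0 := ⟨m, by rw [hm, zero_mul]⟩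
  obtain ⟨n, hn⟩ : ∃ n, Nat.find hex = n + 1 := by
    refine Nat.exists_eq_succ_of_ne_zero fun h0 => hr ?_
    simpa [h0] using Nat.find_spec hex
  have h1 : (p * p') ^ n * r ≠ 0 := Nat.find_min hex (by omega)
  have h2 : (p * p') ^ (n + 1) * r = 0 := hn ▸ Nat.find_spec hex
  by_cases h3 : p * ((p * p') ^ n * r) = 0
  · exact ⟨_, h1, Or.inl h3⟩
  · refine ⟨p * (p * p') ^ n, by rwa [mul_assoc], Or.inr ?_⟩
    rw [← h2]; ring

/-! ### Orthogonally indecomposable modules -/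

namespace IsAdjForm

variable {k R E : Type} [Field k] [CommRing R] [Algebra k R] [AddCommGroup E] [Module k E]
  [Module R E] [IsScalarTower k R E] {σ : R →+* R} {ε : k} {b : E →ₗ[k] E →ₗ[k] k}

/-- The two-generator case: `E` is generated by `u, v`, and the functional `t ↦ b (t u) v` kills no
nonzero ideal of `R`. Then `b (t v) u = b (t η u) v` for some `η` with `η * σ η = 1`, and the pair
`η u, v` has the transposed Gram matrix of `u, v`. -/
lemma exists_of_pair [Module.Finite k R] (h : IsAdjForm σ ε b) (hε : ε * ε = 1)
    (hσ : ∀ r, σ (σ r) = r)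
    (hσk : ∀ c : k, σ (algebraMap k R c) = algebraMap k R c) (u v : E)
    (he : ∀ w : E, ∃ r s : R, w = r • u + s • v)
    (hγ : ∀ r : R, (∀ t : R, b ((r * t) • u) v = 0) → r = 0) :
    ∃ g : E ≃ₗ[k] E, (∀ u v, b (g u) (g v) = b v u) ∧ ∀ (r : R) (u : E), g (r • u) = σ r • g u := by
  let γ : R →ₗ[k] k := b.flip v ∘ₗ (LinearMap.toSpanSingleton R E u).restrictScalars k
  let ψ : R →ₗ[k] k := b.flip u ∘ₗ (LinearMap.toSpanSingleton R E v).restrictScalars k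
  let ν : R →ₗ[k] Module.Dual k R := (LinearMap.mul k R).compr₂ γ
  have hν : Function.Injective ν := by
    refine (injective_iff_map_eq_zero ν).2 fun r hr => hγ r fun t => ?_
    exact LinearMap.congr_fun hr t
  have hνs : Function.Surjective ν :=
    (LinearMap.injective_iff_surjective_of_finrank_eq_finrank
      (Subspace.dual_finrank_eq (K := k) (V := R)).symm).1 hν
  obtain ⟨η, hη'⟩ := hνs ψ
  have hη : ∀ t : R, b ((η * t) • u) v = b (t • v) u := fun t => LinearMap.congr_fun hη' t
  have hη2 : ∀ t : R, b (t • v) u = ε * b (σ t • u) v := by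
    intro t
    rw [h.symm, h.adj' hσ]
  have hηη : σ η * η = 1 := by
    rw [← sub_eq_zero]
    refine hγ _ fun t => ?_
    rw [sub_mul, sub_smul, map_sub, LinearMap.sub_apply, one_mul, mul_comm (σ η), mul_assoc, hη,
      hη2, map_mul, hσ, hη, hη2, hσ, ← mul_assoc, hε, one_mul, sub_self]
  refine h.exists_of_gram hσ hσk u v (η • u) v he ?_ ?_ ?_ ?_ (fun _ => rfl)
  · intro w
    obtain ⟨r, s, rfl⟩ := he w
    refine ⟨r * σ η, s, ?_⟩
    rw [smul_smul, mul_assoc, hηη, mul_one]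
  · intro t
    rw [h.adj' hσ, smul_smul, smul_smul]
    congr 3
    linear_combination t * hηη
  · intro t
    rw [smul_smul, mul_comm, hη]
  · intro t
    rw [h.adj' hσ, smul_smul, hη2, map_mul, hσ, hη, hη2, hσ, ← mul_assoc, hε, one_mul]

end IsAdjForm

namespace IsAdjForm

/-- The orthogonally indecomposable faithful case. There is a nonzero `s` killed by a generator `p`
of a maximal ideal such that every nonzero element of `R` divides `s` or `σ s`. If `b (s e) e ≠ 0`
for some such `s` and some `e`, then `R e` is non-degenerate, so `E` is cyclic. Otherwise
`(u, v) ↦ b (s u) v` is alternating for all such `s`, and any `u, v` with `b (s u) v ≠ 0` form a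
basis of `E`. -/
theorem exists_of_indecomposable {k R E : Type} [Field k] [CommRing R] [Algebra k R]
    [AddCommGroup E] [Module k E] [Module R E] [IsScalarTower k R E] [Module.Finite k E]
    [IsPrincipalIdealRing R] [Nontrivial E]
    {σ : R →+* R} {ε : k} {b : E →ₗ[k] E →ₗ[k] k}
    (h : IsAdjForm σ ε b) (hε : ε * ε = 1) (hσ : ∀ r, σ (σ r) = r)
    (hσk : ∀ c : k, σ (algebraMap k R c) = algebraMap k R c)
    (faith : ∀ r : R, (∀ u : E, r • u = 0) → r = 0)
    (indec : ∀ N : Submodule R E, (∀ u ∈ N, (∀ v ∈ N, b u v = 0) → u = 0) → N = ⊥ ∨ N = ⊤) :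
    ∃ g : E ≃ₗ[k] E, (∀ u v, b (g u) (g v) = b v u) ∧
      ∀ (r : R) (u : E), g (r • u) = σ r • g u := by
  have : Module.Finite k R := by
    refine Module.Finite.of_injective (Algebra.lsmul k k E (A := R)).toLinearMap ?_
    refine (injective_iff_map_eq_zero _).2 fun r hr => faith r fun u => ?_
    exact LinearMap.congr_fun hr u
  have : IsArtinianRing R := IsArtinianRing.of_finite k R
  have : Nontrivial R := Module.nontrivial R E
  obtain ⟨m, hm⟩ := Ideal.exists_maximal R
  obtain ⟨p, rfl⟩ := IsPrincipalIdealRing.principal m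
  rw [Ideal.submodule_span_eq] at hm
  have hq : IsNilpotent (p * σ p) := by
    refine (h.isNilpotent_or_isUnit faith indec (p * σ p) (by rw [map_mul, hσ, mul_comm])).resolve_right
      fun hu => ?_
    exact hm.ne_top (Ideal.span_singleton_eq_top.2 (isUnit_of_mul_isUnit_left hu))
  -- every nonzero element of `R` divides `s` or `σ s`, as soon as `p * s = 0`
  have hdvd : ∀ s : R, p * s = 0 → ∀ r : R, r ≠ 0 → r ∣ s ∨ r ∣ σ s := by
    intro s hs r hr
    obtain ⟨t, ht, hpt | hpt⟩ := exists_mul_ne_zero_of_isNilpotent hq hr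
    · exact Or.inl (dvd_of_mul_left_dvd (dvd_of_mul_eq_zero_of_maximal hm ht hpt hs))
    · right
      have h0 : σ (t * r) ≠ 0 := fun h0 => ht (by rw [← hσ (t * r), h0, map_zero])
      have h1 : p * σ (t * r) = 0 := by
        rw [← hσ p, ← map_mul, hpt, map_zero]
      have := map_dvd σ (dvd_of_mul_eq_zero_of_maximal hm h0 h1 hs)
      rw [hσ] at this
      exact dvd_of_mul_left_dvd this
  obtain ⟨s₀, hs₀, hps₀⟩ : ∃ s, s ≠ 0 ∧ p * s = 0 := by
    obtain ⟨t, ht, hpt | hpt⟩ := exists_mul_ne_zero_of_isNilpotent hq (one_ne_zero (α := R))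
    · exact ⟨_, ht, hpt⟩
    · exact ⟨σ (t * 1), fun h0 => ht (by rw [← hσ (t * 1), h0, map_zero]), by
        rw [← hσ p, ← map_mul, hpt, map_zero]⟩
  by_cases hA : ∃ (s : R) (e : E), p * s = 0 ∧ b (s • e) e ≠ 0
  · obtain ⟨s, e, hps, hse⟩ := hA
    have htop : Submodule.span R {e} = ⊤ := by
      refine (indec (Submodule.span R {e}) ?_).resolve_left ?_
      · intro w hw hw0
        obtain ⟨r, rfl⟩ := Submodule.mem_span_singleton.1 hw
        by_contra hne
        have hr : r ≠ 0 := fun h0 => hne (by rw [h0, zero_smul])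
        have horth : ∀ t : R, b ((r * t) • e) e = 0 := by
          intro t
          rw [mul_comm, mul_smul, h.adj]
          exact hw0 _ (Submodule.smul_mem _ _ (Submodule.mem_span_singleton_self e))
        rcases hdvd s hps r hr with ⟨t, ht⟩ | ⟨t, ht⟩
        · exact hse (ht ▸ horth t)
        · refine hse ?_
          rw [h.symm, h.adj' hσ, ht, horth, mul_zero]
      · intro hbot
        rw [Submodule.span_singleton_eq_bot] at hbot
        simp [hbot] at hse
    have he : ∀ w : E, ∃ r s : R, w = r • e + s • (0 : E) := by
      intro w
      obtain ⟨r, rfl⟩ := Submodule.mem_span_singleton.1 (htop ▸ Submodule.mem_top : w ∈ _)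
      exact ⟨r, 0, by simp⟩
    exact h.exists_of_gram hσ hσk e 0 e 0 he he (by simp) (by simp) (by simp) (by simp)
  · push Not at hA
    have halt : ∀ s : R, p * s = 0 → ∀ u v : E, b (s • u) v = - b (s • v) u := by
      intro s hs u v
      have := hA s (u + v) hs
      rw [smul_add, map_add, map_add, LinearMap.add_apply, LinearMap.add_apply, hA s u hs,
        hA s v hs] at this
      linear_combination this
    have hσs : ∀ s : R, p * s = 0 → ∀ u : E, σ s • u = -(ε • (s • u)) := by
      intro s hs u
      rw [← sub_eq_zero]
      refine h.nondeg _ fun v => ?_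
      have h1 : b (σ s • u) v = ε * b (s • v) u := by rw [← h.adj' hσ, h.symm]
      rw [map_sub, LinearMap.sub_apply, h1, halt s hs v u, map_neg, map_smul b ε,
        LinearMap.neg_apply, LinearMap.smul_apply, smul_eq_mul]
      ring
    have hdvd' : ∀ s : R, p * s = 0 → ∀ r : R, r ≠ 0 → r ∣ s := by
      intro s hs r hr
      rcases hdvd s hs r hr with h1 | ⟨t, ht⟩
      · exact h1
      · refine ⟨-(algebraMap k R ε * t), ?_⟩
        rw [← sub_eq_zero]
        refine faith _ fun u => ?_
        have h2 := hσs s hs u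
        rw [ht] at h2
        rw [sub_smul, mul_neg, neg_smul, sub_neg_eq_add, mul_left_comm, mul_smul, h2,
          algebraMap_smul, smul_neg, smul_smul, hε, one_smul, add_neg_cancel]
    obtain ⟨u, hu⟩ : ∃ u : E, s₀ • u ≠ 0 := by
      by_contra! h0
      exact hs₀ (faith _ h0)
    obtain ⟨v, hv⟩ : ∃ v : E, b (s₀ • u) v ≠ 0 := by
      by_contra! h0
      exact hu (h.nondeg _ h0)
    -- nonzero combinations of `u, v` are not orthogonal to both `R u` and `R v`
    have hind : ∀ r r' : R, (∀ t : R, b (r • u + r' • v) (t • u) = 0) →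
        (∀ t : R, b (r • u + r' • v) (t • v) = 0) → r = 0 ∧ r' = 0 := by
      intro r r' h1 h2
      by_contra hne
      obtain ⟨d, hd⟩ := IsPrincipalIdealRing.principal (Ideal.span {r, r'})
      rw [Ideal.submodule_span_eq] at hd
      obtain ⟨x, y, hxy⟩ : ∃ x y, x * r + y * r' = d :=
        Ideal.mem_span_pair.1 (hd ▸ Ideal.mem_span_singleton_self d)
      obtain ⟨c, hc⟩ : d ∣ r := Ideal.mem_span_singleton.1 (hd ▸ Ideal.subset_span (by simp))
      obtain ⟨c', hc'⟩ : d ∣ r' := Ideal.mem_span_singleton.1 (hd ▸ Ideal.subset_span (by simp))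
      have hd0 : d ≠ 0 := by
        rintro rfl
        exact hne ⟨by rw [hc, zero_mul], by rw [hc', zero_mul]⟩
      obtain ⟨t, ht⟩ := hdvd' s₀ hps₀ d hd0
      have horth : ∀ a : R, ∀ z, (∀ t : R, b (r • u + r' • v) (t • z) = 0) →
          b ((a * c * s₀) • u + (a * c' * s₀) • v) z = 0 := by
        intro a z hz
        have : (a * c * s₀) • u + (a * c' * s₀) • v = (a * t) • (r • u + r' • v) := by
          rw [hc, hc', ht]
          module
        rw [this, h.adj, hz]
      by_cases hcs : c * s₀ = 0
      · have hcs' : c' * s₀ ≠ 0 := by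
          intro hcs'
          apply hs₀
          have e1 : d = (x * c + y * c') * d := by
            conv_lhs => rw [← hxy, hc, hc']
            ring
          calc s₀ = (x * c + y * c') * (d * t) := by rw [← mul_assoc, ← e1, ht]
            _ = x * (c * s₀) + y * (c' * s₀) := by rw [← ht]; ring
            _ = 0 := by rw [hcs, hcs']; ring
        obtain ⟨a, ha⟩ := hdvd' s₀ hps₀ _ hcs'
        have := horth a u h1
        rw [mul_assoc, hcs, mul_zero, zero_smul, zero_add, mul_assoc, mul_comm a, ← ha,
          halt s₀ hps₀] at this
        exact hv (neg_eq_zero.1 this)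
      · obtain ⟨a, ha⟩ := hdvd' s₀ hps₀ _ hcs
        have := horth a v h2
        rw [mul_assoc, mul_comm a, ← ha, map_add, LinearMap.add_apply,
          hA (a * c' * s₀) v (by rw [mul_left_comm, hps₀, mul_zero]), add_zero] at this
        exact hv this
    have htop : Submodule.span R {u, v} = ⊤ := by
      refine (indec (Submodule.span R {u, v}) ?_).resolve_left ?_
      · intro w hw hw0
        obtain ⟨r, r', rfl⟩ := Submodule.mem_span_pair.1 hw
        obtain ⟨rfl, rfl⟩ := hind r r'
          (fun t => hw0 _ (Submodule.smul_mem _ _ (Submodule.subset_span (by simp))))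
          (fun t => hw0 _ (Submodule.smul_mem _ _ (Submodule.subset_span (by simp))))
        simp
      · intro hbot
        have : u ∈ Submodule.span R {u, v} := Submodule.subset_span (by simp)
        rw [hbot, Submodule.mem_bot] at this
        exact hu (by rw [this, smul_zero])
    refine h.exists_of_pair hε hσ hσk u v ?_ ?_
    · intro w
      obtain ⟨r, r', hw⟩ := Submodule.mem_span_pair.1 (htop ▸ Submodule.mem_top : w ∈ _)
      exact ⟨r, r', hw.symm⟩
    · intro r hr
      by_contra hr0
      obtain ⟨t, ht⟩ := hdvd' s₀ hps₀ r hr0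
      exact hv (ht ▸ hr t)

/-- The indecomposable case without faithfulness, by passing to `R ⧸ Ann E`. -/
theorem exists_of_indecomposable' {k R E : Type} [Field k] [CommRing R] [Algebra k R]
    [AddCommGroup E] [Module k E] [Module R E] [IsScalarTower k R E] [Module.Finite k E]
    [IsPrincipalIdealRing R] [Nontrivial E]
    {σ : R →+* R} {ε : k} {b : E →ₗ[k] E →ₗ[k] k}
    (h : IsAdjForm σ ε b) (hε : ε * ε = 1) (hσ : ∀ r, σ (σ r) = r)
    (hσk : ∀ c : k, σ (algebraMap k R c) = algebraMap k R c)
    (indec : ∀ N : Submodule R E, (∀ u ∈ N, (∀ v ∈ N, b u v = 0) → u = 0) → N = ⊥ ∨ N = ⊤) :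
    ∃ g : E ≃ₗ[k] E, (∀ u v, b (g u) (g v) = b v u) ∧
      ∀ (r : R) (u : E), g (r • u) = σ r • g u := by
  let I := Module.annihilator R E
  let _ : Module (R ⧸ I) E := Module.quotientAnnihilator
  have hmk : ∀ (r : R) (u : E), (Ideal.Quotient.mk I r) • u = r • u := fun _ _ => rfl
  have : IsScalarTower k (R ⧸ I) E := by
    refine IsScalarTower.of_algebraMap_smul fun c u => ?_
    change (Ideal.Quotient.mk I (algebraMap k R c)) • u = c • u
    rw [hmk, algebraMap_smul]
  have hI : ∀ r ∈ I, σ r ∈ I := by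
    intro r hr
    rw [Module.mem_annihilator] at hr ⊢
    intro u
    refine h.nondeg _ fun v => ?_
    rw [← h.adj' hσ, hr, map_zero]
  let σ' : R ⧸ I →+* R ⧸ I := Ideal.quotientMap I σ hI
  have hσ'mk : ∀ r, σ' (Ideal.Quotient.mk I r) = Ideal.Quotient.mk I (σ r) := fun _ => rfl
  have : IsPrincipalIdealRing (R ⧸ I) :=
    IsPrincipalIdealRing.of_surjective (Ideal.Quotient.mk I) Ideal.Quotient.mk_surjective
  have h' : IsAdjForm σ' ε b := by
    refine ⟨fun r u v => ?_, h.symm, h.nondeg⟩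
    obtain ⟨r, rfl⟩ := Ideal.Quotient.mk_surjective r
    exact h.adj r u v
  obtain ⟨g, hg, hgr⟩ := h'.exists_of_indecomposable hε (fun r => by
      obtain ⟨r, rfl⟩ := Ideal.Quotient.mk_surjective r
      rw [hσ'mk, hσ'mk, hσ]) (fun c => by
      change σ' (Ideal.Quotient.mk I (algebraMap k R c)) = Ideal.Quotient.mk I (algebraMap k R c)
      rw [hσ'mk, hσk]) (fun r hr => by
      obtain ⟨r, rfl⟩ := Ideal.Quotient.mk_surjective r
      rw [Ideal.Quotient.eq_zero_iff_mem, Module.mem_annihilator]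
      exact hr) (fun N hN => by
      let N' : Submodule R E :=
        { N.toAddSubmonoid with
          smul_mem' := fun r u hu => N.smul_mem (Ideal.Quotient.mk I r) hu }
      refine (indec N' hN).imp (fun hb => ?_) (fun ht => ?_)
      · ext u
        exact SetLike.ext_iff.1 hb u
      · ext u
        exact SetLike.ext_iff.1 ht u)
  exact ⟨g, hg, fun r u => hgr (Ideal.Quotient.mk I r) u⟩

/-! ### Orthogonal decomposition -/

/-- Restriction to a non-degenerate submodule. -/
lemma restrict {k R E : Type} [Field k] [CommRing R] [Algebra k R]
    [AddCommGroup E] [Module k E] [Module R E] [IsScalarTower k R E]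
    {σ : R →+* R} {ε : k} {b : E →ₗ[k] E →ₗ[k] k} (h : IsAdjForm σ ε b) (N : Submodule R E)
    (hN : ∀ u ∈ N, (∀ v ∈ N, b u v = 0) → u = 0) :
    IsAdjForm (E := N) σ ε
      (b.compl₁₂ (N.subtype.restrictScalars k) (N.subtype.restrictScalars k)) where
  adj r u v := h.adj r u v
  symm u v := h.symm u v
  nondeg u hu := Subtype.ext (hN u u.2 fun v hv => hu ⟨v, hv⟩)

/-- Splitting off orthogonal summands reduces to the indecomposable case, by induction on
`dim E`: a non-degenerate submodule `N` has its orthogonal complement as a complement, and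
anti-isometries of the two summands add up. -/
theorem exists_conj {k R : Type} [Field k] [CommRing R] [Algebra k R] [IsPrincipalIdealRing R]
    {σ : R →+* R} {ε : k} (hε : ε * ε = 1) (hσ : ∀ r, σ (σ r) = r)
    (hσk : ∀ c : k, σ (algebraMap k R c) = algebraMap k R c) (n : ℕ) :
    ∀ (E : Type) [AddCommGroup E] [Module k E] [Module R E] [IsScalarTower k R E]
      [Module.Finite k E] (b : E →ₗ[k] E →ₗ[k] k), IsAdjForm σ ε b → Module.finrank k E = n →
      ∃ g : E ≃ₗ[k] E, (∀ u v, b (g u) (g v) = b v u) ∧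
        ∀ (r : R) (u : E), g (r • u) = σ r • g u := by
  induction n using Nat.strong_induction_on with
  | _ n ih =>
  intro E _ _ _ _ _ b h hn
  rcases subsingleton_or_nontrivial E with hE | hE
  · exact ⟨LinearEquiv.refl k E, fun u v => by rw [Subsingleton.elim u v]; rfl,
      fun r u => Subsingleton.elim _ _⟩
  by_cases indec : ∀ N : Submodule R E,
      (∀ u ∈ N, (∀ v ∈ N, b u v = 0) → u = 0) → N = ⊥ ∨ N = ⊤
  · exact h.exists_of_indecomposable' hε hσ hσk indec
  push Not at indec
  obtain ⟨N, hN, hbot, htop⟩ := indec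
  let N' : Submodule R E :=
    { carrier := {v | ∀ u ∈ N, b u v = 0}
      add_mem' := fun {x y} hx hy u hu => by rw [map_add, hx u hu, hy u hu, add_zero]
      zero_mem' := fun u _ => map_zero _
      smul_mem' := fun r x hx u hu => by
        rw [h.adj' hσ]; exact hx _ (N.smul_mem _ hu) }
  have hrefl : b.IsRefl := fun u v huv => h.ortho_symm huv
  have hcompl : IsCompl (N.restrictScalars k) (N'.restrictScalars k) :=
    LinearMap.BilinForm.isCompl_orthogonal_of_restrict_nondegenerate (B := b) hrefl
      ⟨fun u hu => Subtype.ext (hN u u.2 fun v hv => hu ⟨v, hv⟩),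
       fun u hu => Subtype.ext (hN u u.2 fun v hv => h.ortho_symm (hu ⟨v, hv⟩))⟩
  have hN' : ∀ u ∈ N', (∀ v ∈ N', b u v = 0) → u = 0 := by
    intro u hu hu0
    refine h.nondeg u fun v => ?_
    obtain ⟨x, hx, y, hy, rfl⟩ := Submodule.mem_sup.1
      (hcompl.sup_eq_top ▸ Submodule.mem_top : v ∈ N.restrictScalars k ⊔ N'.restrictScalars k)
    rw [map_add, hu0 y hy, h.ortho_symm (hu x hx), add_zero]
  have hfin := Submodule.finrank_add_eq_of_isCompl hcompl
  have hNpos : 0 < Module.finrank k (N.restrictScalars k) := by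
    rw [Nat.pos_iff_ne_zero, Ne, Submodule.finrank_eq_zero]
    intro h0
    exact hbot ((Submodule.restrictScalars_eq_bot_iff ..).1 h0)
  have hNlt : Module.finrank k (N.restrictScalars k) < n := by
    rw [← hn]
    refine Submodule.finrank_lt fun h0 => htop ?_
    exact (Submodule.restrictScalars_eq_top_iff ..).1 h0
  have : Module.Finite k N := inferInstanceAs (Module.Finite k (N.restrictScalars k))
  have : Module.Finite k N' := inferInstanceAs (Module.Finite k (N'.restrictScalars k))
  obtain ⟨g, hg, hgr⟩ := ih _ hNlt N _ (h.restrict N hN) rfl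
  obtain ⟨g', hg', hgr'⟩ := ih (Module.finrank k (N'.restrictScalars k)) (by omega) N' _
    (h.restrict N' hN') rfl
  let e : (N × N') ≃ₗ[k] E := Submodule.prodEquivOfIsCompl _ _ hcompl
  have he : ∀ z, e z = (z.1 : E) + z.2 := fun z => rfl
  have her : ∀ (r : R) z, e (r • z) = r • e z := fun r z => by
    rw [he, he, smul_add]; rfl
  let G : E ≃ₗ[k] E := e.symm ≪≫ₗ (g.prodCongr g') ≪≫ₗ e
  have hG : ∀ z, G (e z) = e (g z.1, g' z.2) := fun z => by simp [G]
  have hbe : ∀ z w, b (e z) (e w) = b z.1 w.1 + b z.2 w.2 := by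
    intro z w
    rw [he, he, map_add, map_add, LinearMap.add_apply, LinearMap.add_apply,
      w.2.2 _ z.1.2, h.ortho_symm (z.2.2 _ w.1.2)]
    ring
  refine ⟨G, fun u v => ?_, fun r u => ?_⟩
  · obtain ⟨z, rfl⟩ := e.surjective u
    obtain ⟨w, rfl⟩ := e.surjective v
    rw [hG, hG, hbe, hbe]
    exact congrArg₂ (· + ·) (hg z.1 w.1) (hg' z.2 w.2)
  · obtain ⟨z, rfl⟩ := e.surjective u
    rw [← her, hG, hG, ← her]
    congr 1
    exact Prod.ext (hgr r z.1) (hgr' r z.2)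

end IsAdjForm

/-! ### Laurent polynomials and the trace form -/

lemma isPrincipalIdealRing_polynomial (A : Type) [CommRing A] [IsSemisimpleRing A] :
    IsPrincipalIdealRing (Polynomial A) := by
  let _ : ∀ m : MaximalSpectrum A, Field (A ⧸ m.asIdeal) := fun m =>
    Ideal.Quotient.field m.asIdeal
  let e : Polynomial A ≃+* ∀ m : MaximalSpectrum A, Polynomial (A ⧸ m.asIdeal) :=
    (Polynomial.mapEquiv (IsArtinianRing.equivPi A).toRingEquiv).trans (Polynomial.piEquiv _)
  exact IsPrincipalIdealRing.of_surjective e.symm e.symm.surjective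

lemma isPrincipalIdealRing_laurent (A : Type) [CommRing A] [IsSemisimpleRing A] :
    IsPrincipalIdealRing (LaurentPolynomial A) := by
  have := isPrincipalIdealRing_polynomial A
  refine ⟨fun I => ?_⟩
  rw [← IsLocalization.map_under (Submonoid.powers (Polynomial.X : Polynomial A)) _ I]
  obtain ⟨f, hf⟩ := IsPrincipalIdealRing.principal (Ideal.under (Polynomial A) I)
  rw [hf, Ideal.submodule_span_eq, Ideal.map_span, Set.image_singleton]
  exact ⟨_, rfl⟩

/-- The trace form of a commutative semisimple algebra in characteristic zero is non-degenerate: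
a nonzero ideal contains a nonzero idempotent, whose trace is the dimension of its range. -/
lemma eq_zero_of_trace_mul_eq_zero {k A : Type} [Field k] [CharZero k] [CommRing A] [Algebra k A]
    [FiniteDimensional k A] [IsSemisimpleRing A] (a : A)
    (ha : ∀ c, Algebra.trace k A (c * a) = 0) : a = 0 := by
  obtain ⟨e, he, hspan⟩ := IsSemisimpleRing.ideal_eq_span_idempotent (Ideal.span {a})
  obtain ⟨c, hc⟩ := Ideal.mem_span_singleton'.1 (hspan ▸ Ideal.mem_span_singleton_self e)
  have htr := ha c
  rw [hc, Algebra.trace_apply] at htr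
  have h0 : Algebra.lmul k A e = 0 := by
    refine (LinearMap.IsIdempotentElem.trace_eq_zero_iff ?_).1 htr
    exact he.map (Algebra.lmul k A)
  have he0 : e = 0 := by simpa using LinearMap.congr_fun h0 1
  rw [he0] at hspan
  simpa using hspan

/-! ### MVW conjugation -/

/-- MVW theorem: for every `x ∈ U(E)` (an `A`-linear automorphism of the
`ε`-Hermitian `A`-module `E` preserving the form) there is an element
`(g, -1)` of the MVW-extension `Ŭ(E)` (a `k`-linear automorphism `g` with
`⟨gu, gv⟩ = ⟨v, u⟩`) such that `g x g⁻¹ = x⁻¹`. -/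
theorem mvw_conjugation {k A : Type} [Field k] [CharZero k]
    [CommRing A] [Algebra k A] [FiniteDimensional k A] [IsSemisimpleRing A]
    (τ : A ≃ₐ[k] A) (hτ : ∀ a, τ (τ a) = a)
    (ε : A) (hε : ε = 1 ∨ ε = -1)
    (E : Type) [AddCommGroup E] [Module A E] [Module.Finite A E]
    [Module k E] [IsScalarTower k A E]
    (B : E → E → A) (hherm : IsHermForm A τ ε E B)
    (x : E ≃ₗ[A] E) (hx : ∀ u v : E, B (x u) (x v) = B u v) :
    ∃ g : E ≃ₗ[k] E, (∀ u v : E, B (g u) (g v) = B v u) ∧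
      ∀ v : E, g (x v) = x.symm (g v) := by
  obtain ⟨hadd₁, hadd₂, hsmul, hsymm, hnondeg⟩ := hherm
  obtain ⟨ε', hε', rfl⟩ : ∃ ε' : k, ε' * ε' = 1 ∧ ε = algebraMap k A ε' := by
    rcases hε with rfl | rfl
    · exact ⟨1, by simp, by simp⟩
    · exact ⟨-1, by simp, by simp⟩
  have hsmul₂ : ∀ (a : A) (u v : E), B u (a • v) = τ a * B u v := by
    intro a u v
    rw [hsymm, hsmul, map_mul, hsymm u v]
    ring
  have hsmulk : ∀ (c : k) (u v : E), B (c • u) v = c • B u v := by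
    intro c u v
    rw [← algebraMap_smul A c u, hsmul, Algebra.smul_def]
  have hsmulk₂ : ∀ (c : k) (u v : E), B u (c • v) = c • B u v := by
    intro c u v
    rw [← algebraMap_smul A c v, hsmul₂, τ.commutes, Algebra.smul_def]
  have : Module.Finite k E := Module.Finite.trans A E
  have htr : ∀ a, Algebra.trace k A (τ a) = Algebra.trace k A a :=
    fun a => Algebra.trace_eq_of_algEquiv τ a
  let b : E →ₗ[k] E →ₗ[k] k := LinearMap.mk₂ k (fun u v => Algebra.trace k A (B u v))
    (fun u u' v => by rw [hadd₁, map_add]) (fun c u v => by rw [hsmulk, map_smul])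
    (fun u v v' => by rw [hadd₂, map_add]) (fun c u v => by rw [hsmulk₂, map_smul])
  have hb : ∀ u v, b u v = Algebra.trace k A (B u v) := fun _ _ => rfl
  -- the action of `A[T;T⁻¹]` on `E`, with `T` acting as `x`
  let X : (Module.End A E)ˣ := (LinearMap.GeneralLinearGroup.generalLinearEquiv A E).symm x
  have hX : ∀ u, (X : Module.End A E) u = x u := fun _ => rfl
  have hXinv : ∀ u, ((X⁻¹ : (Module.End A E)ˣ) : Module.End A E) u = x.symm u := fun _ => rfl
  let f : LaurentPolynomial A →ₐ[A] Module.End A E :=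
    AddMonoidAlgebra.lift A (Module.End A E) ℤ ((Units.coeHom _).comp (zpowersHom _ X))
  have hf : ∀ (n : ℤ) (a : A), f (AddMonoidAlgebra.single n a) = a • ((X ^ n : _) : Module.End A E) := by
    intro n a
    exact AddMonoidAlgebra.lift_single _ n a
  let σ : LaurentPolynomial A →+* LaurentPolynomial A :=
    (LaurentPolynomial.invert : LaurentPolynomial A ≃ₐ[A] LaurentPolynomial A).toRingEquiv.toRingHom.comp
      (AddMonoidAlgebra.mapRingHom ℤ (τ : A →+* A))
  have hσs : ∀ (n : ℤ) (a : A), σ (AddMonoidAlgebra.single n a) =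
      AddMonoidAlgebra.single (-n) (τ a) := by
    intro n a
    change LaurentPolynomial.invert (AddMonoidAlgebra.mapRingHom ℤ (τ : A →+* A) _) = _
    rw [AddMonoidAlgebra.mapRingHom_single]
    exact AddMonoidAlgebra.domCongr_single _ _ _
  let _ : Module (LaurentPolynomial A) E := Module.compHom E f.toRingHom
  have hact : ∀ (r : LaurentPolynomial A) (u : E), r • u = f r u := fun _ _ => rfl
  have hXB : ∀ (n : ℤ) (u v : E), B (((X ^ n : _) : Module.End A E) u) v =
      B u (((X ^ (-n) : _) : Module.End A E) v) := by
    have hinv : ∀ u v, B (x.symm u) v = B u (x v) := fun u v => by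
      rw [← hx, x.apply_symm_apply]
    have hinv' : ∀ u v, B (x u) v = B u (x.symm v) := fun u v => by
      rw [← hx u, x.apply_symm_apply]
    intro n
    induction n using Int.induction_on with
    | zero => intro u v; simp
    | succ i ih =>
      intro u v
      rw [zpow_add_one, neg_add, add_comm (-(i : ℤ)), zpow_add, zpow_neg_one, Units.val_mul,
        Units.val_mul, Module.End.mul_apply, Module.End.mul_apply, hX, hXinv, ih, hinv']
    | pred i ih =>
      intro u v
      rw [zpow_sub_one, neg_sub, sub_eq_add_neg, zpow_add, zpow_one, Units.val_mul,
        Units.val_mul, Module.End.mul_apply, Module.End.mul_apply, hX, hXinv, ih, hinv]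
  have : IsScalarTower k (LaurentPolynomial A) E := by
    refine IsScalarTower.of_algebraMap_smul fun c u => ?_
    rw [hact]
    change f (AddMonoidAlgebra.single 0 (algebraMap k A c)) u = _
    rw [hf, zpow_zero]
    simp
  have := isPrincipalIdealRing_laurent A
  have h : IsAdjForm σ ε' b := by
    refine ⟨fun r u v => ?_, fun u v => ?_, fun u hu => ?_⟩
    · induction r using AddMonoidAlgebra.induction_linear with
      | zero => simp
      | add p q hp hq => rw [add_smul, map_add, map_add, add_smul, map_add, LinearMap.add_apply, hp, hq]
      | single n a =>
        rw [hσs, hact, hact, hf, hf, LinearMap.smul_apply, LinearMap.smul_apply, hb, hb, hsmul,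
          hsmul₂, hτ, hXB]
    · rw [hb, hb, hsymm, ← Algebra.smul_def, map_smul, htr, smul_eq_mul]
    · refine hnondeg u fun v => eq_zero_of_trace_mul_eq_zero (k := k) _ fun c => ?_
      rw [← hτ c, ← hsmul₂]
      exact hu _
  obtain ⟨g, hg, hgr⟩ := IsAdjForm.exists_conj hε' (fun r => by
      induction r using AddMonoidAlgebra.induction_linear with
      | zero => simp
      | add p q hp hq => rw [map_add, map_add, hp, hq]
      | single n a => rw [hσs, hσs, neg_neg, hτ]) (fun c => by
      change σ (AddMonoidAlgebra.single 0 (algebraMap k A c)) =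
        AddMonoidAlgebra.single 0 (algebraMap k A c)
      rw [hσs, τ.commutes, neg_zero]) _ E b h rfl
  have hgA : ∀ (a : A) u, g (a • u) = τ a • g u := by
    intro a u
    have := hgr (AddMonoidAlgebra.single 0 a) u
    rw [hσs, neg_zero, hact, hact, hf, hf, zpow_zero] at this
    exact this
  refine ⟨g, fun u v => ?_, fun v => ?_⟩
  · rw [← sub_eq_zero]
    refine eq_zero_of_trace_mul_eq_zero (k := k) _ fun c => ?_
    have h1 := hg (τ c • u) v
    rw [hgA, hτ, hb, hb, hsmul, hsmul₂, hτ] at h1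
    rw [mul_sub, map_sub, h1, sub_self]
  · have := hgr (AddMonoidAlgebra.single 1 1) v
    rw [hσs, hact, hact, hf, hf, zpow_one, zpow_neg, zpow_one, map_one, one_smul, one_smul] at this
    exact this
end

section
/- Let E be a quadratic space over a field A of characteristic zero, and define SŎ(E) := {(g, δ) ∈ O(E) × {±1} : det(g) = δ^⌊(dim E + 1)/2⌋}. Then SŎ(E) is a subgroup of O(E) × {±1} containing SO(E) = SO(E) × {1} as a subgroup of index two (when E ≠ 0), and for every x ∈ SO(E) there exists ğ = (g, -1) ∈ SŎ(E) \ SO(E) such that g x g⁻¹ = x⁻¹. -/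
/-!
The group axioms for `SŎ(E)` are formal; the content is that every isometry `x` of a
non-degenerate quadratic space is inverted, under conjugation, by an isometry `g` of determinant
`(-1)^⌊(dim E + 1)/2⌋`. This is true for all `x ∈ O(E)`, with no condition on `det x`
(`IsometryPair.isInverted`); `x = 1` then gives the statement about the index.

The claim passes to orthogonal sums of `x`-stable subspaces (`isInverted_of_isCompl`): the exponents
`⌊(dim + 1)/2⌋` add up unless both dimensions are odd, and on an odd-dimensional summand `g` may be
replaced by `-g`. So one may assume that `E` is orthogonally indecomposable under `x`. By
Fitting's lemma (`IsIndec.fitting`) a self-adjoint operator commuting with `x` is then nilpotent or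
invertible; this applies to `x + x⁻¹ - 2` and `x + x⁻¹ + 2`, whose product is `(x - x⁻¹)²`.

* If both are invertible, so is the skew-adjoint operator `J = x - x⁻¹`. Put `y = x + x⁻¹`. A
  power of an irreducible polynomial kills `y`; the last nonzero power `s` of that polynomial in `y`
  is self-adjoint, so `B(s v, v) ≠ 0` for some `v`, which makes `V = A[y] v` non-degenerate. Since
  `J` is skew and commutes with `y`, `J V` is orthogonal to `V`, and indecomposability gives
  `E = V ⊕ J V`. Then `g = 1` on `V` and `g = -1` on `J V` commutes with `y` and anticommutes with
  `J`, hence inverts `x`, and its determinant is `(-1)^(dim E / 2)`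
  (`isInverted_of_bijective_sub`).

* Otherwise `x` or `-x` is unipotent, and the Cayley transform replaces it by a nilpotent
  skew-adjoint `N`, to be anticommuted with (`exists_cayley`). Let `N^k ≠ 0 = N^(k+1)`. If `k` is
  even, `N^k` is self-adjoint and `E` is a single Jordan chain `N^i v` with `B(N^k v, v) ≠ 0`; take
  `g = (-1)^i` on `N^i v`. The dimension `k + 1` is odd, so the sign of the determinant is free. If
  `k` is odd, `E` is spanned by two chains `N^i v` and `N^i w`, where `w` is orthogonal to every
  `N^i v` except `N^k v`; take `g = (-1)^i` on the first and `-(-1)^i` on the second, of determinant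
  `(-1)^(k+1)` (`isInverted_of_unipotent`).
-/

/-- `SŎ(E)`: the subset of `O(E) × {±1}` of pairs `(g, δ)` with
`det g = δ^⌊(dim E + 1)/2⌋`, where `E` is a quadratic space over a field `A` of
characteristic zero with non-degenerate symmetric bilinear form `B`. -/
def SObreve (A : Type) [Field A] (E : Type) [AddCommGroup E] [Module A E]
    (B : E → E → A) : Set ((E ≃ₗ[A] E) × Aˣ) :=
  {p | (∀ u v : E, B (p.1 u) (p.1 v) = B u v) ∧ (p.2 = 1 ∨ p.2 = -1) ∧
    LinearMap.det (p.1 : E →ₗ[A] E) = (p.2 : A) ^ ((Module.finrank A E + 1) / 2)}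

/-! ### Isometries with a chosen inverse, orthogonal sums, Fitting's lemma -/

/-- `x` is an isometry of the non-degenerate symmetric form `B`, with inverse `x'`. Keeping the
inverse as a separate endomorphism makes restriction to stable subspaces painless. -/
structure IsometryPair {A E : Type} [Field A] [AddCommGroup E] [Module A E]
    (B : LinearMap.BilinForm A E) (x x' : Module.End A E) : Prop where
  symm : ∀ u v, B u v = B v u
  nondeg : ∀ u, (∀ v, B u v = 0) → u = 0
  isom : ∀ u v, B (x u) (x v) = B u v
  left : ∀ u, x' (x u) = u
  right : ∀ u, x (x' u) = u

/-- Some isometry `g` of determinant `(-1)^⌊(dim E + 1)/2⌋` satisfies `g x = x' g`. -/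
def IsInverted {A E : Type} [Field A] [AddCommGroup E] [Module A E]
    (B : LinearMap.BilinForm A E) (x x' : Module.End A E) : Prop :=
  ∃ g : Module.End A E, (∀ u v, B (g u) (g v) = B u v) ∧ (∀ u, g (x u) = x' (g u)) ∧
    LinearMap.det g = (-1) ^ ((Module.finrank A E + 1) / 2)

/-- `E` is not an orthogonal sum of two proper subspaces stable under `x` and `x'`. -/
def IsIndec {A E : Type} [Field A] [AddCommGroup E] [Module A E]
    (B : LinearMap.BilinForm A E) (x x' : Module.End A E) : Prop :=
  ∀ W : Submodule A E, (∀ u ∈ W, x u ∈ W) → (∀ u ∈ W, x' u ∈ W) →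
    (∀ u ∈ W, (∀ v ∈ W, B u v = 0) → u = 0) → W = ⊥ ∨ W = ⊤

section Inversion

variable {A E : Type} [Field A] [AddCommGroup E] [Module A E]
  {B : LinearMap.BilinForm A E} {x x' : Module.End A E}

lemma IsometryPair.adj (h : IsometryPair B x x') (u v : E) : B (x u) v = B u (x' v) := by
  rw [← h.isom u (x' v), h.right]

lemma IsometryPair.adj' (h : IsometryPair B x x') (u v : E) : B (x' u) v = B u (x v) := by
  rw [h.symm, ← h.adj, h.symm]

lemma IsometryPair.neg (h : IsometryPair B x x') : IsometryPair B (-x) (-x') where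
  symm := h.symm
  nondeg := h.nondeg
  isom u v := by simp [h.isom]
  left u := by simp [h.left]
  right u := by simp [h.right]

variable [Module.Finite A E]

/-- In odd dimension `-g` inverts `x` whenever `g` does and has the opposite determinant, so an
inverting isometry of either sign exists as soon as one does. -/
lemma isInverted_of_sign {g : Module.End A E} (h1 : ∀ u v, B (g u) (g v) = B u v)
    (h2 : ∀ u, g (x u) = x' (g u)) (ho : Odd (Module.finrank A E))
    (hd : LinearMap.det g = 1 ∨ LinearMap.det g = -1) (e : A) (he : e = 1 ∨ e = -1) :
    ∃ g : Module.End A E, (∀ u v, B (g u) (g v) = B u v) ∧ (∀ u, g (x u) = x' (g u)) ∧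
      LinearMap.det g = e := by
  by_cases hc : LinearMap.det g = e
  · exact ⟨g, h1, h2, hc⟩
  · refine ⟨-g, by simp [h1], by simp [h2], ?_⟩
    have : (-g) = (-1 : A) • g := by simp
    rw [this, LinearMap.det_smul, ho.neg_one_pow]
    rcases hd with hd | hd <;> rcases he with he | he <;> simp_all

lemma exists_glue {P Q : Submodule A E} (h : IsCompl P Q) (g₁ : Module.End A P)
    (g₂ : Module.End A Q) : ∃ g : Module.End A E, (∀ p : P, g p = g₁ p) ∧ (∀ q : Q, g q = g₂ q) ∧
      LinearMap.det g = LinearMap.det g₁ * LinearMap.det g₂ := by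
  let e := Submodule.prodEquivOfIsCompl P Q h
  refine ⟨e.toLinearMap ∘ₗ (g₁.prodMap g₂) ∘ₗ e.symm.toLinearMap, fun p => ?_, fun q => ?_, ?_⟩
  · simp [e]
  · simp [e]
  · rw [LinearMap.det_conj, LinearMap.det_prodMap]

lemma isInverted_of_isCompl (hx : IsometryPair B x x') {P Q : Submodule A E} (h : IsCompl P Q)
    (hPQ : ∀ p ∈ P, ∀ q ∈ Q, B p q = 0)
    (hP : ∀ u ∈ P, x u ∈ P) (hP' : ∀ u ∈ P, x' u ∈ P)
    (hQ : ∀ u ∈ Q, x u ∈ Q) (hQ' : ∀ u ∈ Q, x' u ∈ Q)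
    (iP : IsInverted (B.restrict P) (x.restrict hP) (x'.restrict hP'))
    (iQ : IsInverted (B.restrict Q) (x.restrict hQ) (x'.restrict hQ')) : IsInverted B x x' := by
  have hn : Module.finrank A P + Module.finrank A Q = Module.finrank A E :=
    Submodule.finrank_add_eq_of_isCompl h
  obtain ⟨g₂, a₂, b₂, c₂⟩ := iQ
  obtain ⟨g₁, a₁, b₁, c₁⟩ : ∃ g : Module.End A P,
      (∀ u v, B.restrict P (g u) (g v) = B.restrict P u v) ∧
      (∀ u, g (x.restrict hP u) = x'.restrict hP' (g u)) ∧
      LinearMap.det g = (-1) ^ ((Module.finrank A E + 1) / 2 + (Module.finrank A Q + 1) / 2) := by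
    obtain ⟨g₁, a₁, b₁, c₁⟩ := iP
    rcases Nat.even_or_odd (Module.finrank A P) with ho | ho
    · refine ⟨g₁, a₁, b₁, c₁.trans ?_⟩
      obtain ⟨m, hm⟩ := ho
      have : (Module.finrank A E + 1) / 2 = m + (Module.finrank A Q + 1) / 2 := by omega
      rw [this, add_assoc, pow_add, (Even.add_self _).neg_one_pow, mul_one]
      congr 1; omega
    · refine isInverted_of_sign a₁ b₁ ho ?_ _ (neg_one_pow_eq_or A _)
      rw [c₁]; exact neg_one_pow_eq_or A _
  obtain ⟨g, e₁, e₂, d⟩ := exists_glue h g₁ g₂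
  have key : ∀ u, ∃ p : P, ∃ q : Q, u = (p : E) + q := fun u => by
    obtain ⟨p, hp, q, hq, rfl⟩ := Submodule.mem_sup.1 (h.sup_eq_top ▸ Submodule.mem_top : u ∈ P ⊔ Q)
    exact ⟨⟨p, hp⟩, ⟨q, hq⟩, rfl⟩
  have z1 : ∀ (p : P) (q : Q), B p q = 0 := fun p q => hPQ p p.2 q q.2
  have z2 : ∀ (p : P) (q : Q), B q p = 0 := fun p q => by rw [hx.symm, z1]
  refine ⟨g, fun u v => ?_, fun u => ?_, ?_⟩
  · obtain ⟨p, q, rfl⟩ := key u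
    obtain ⟨p', q', rfl⟩ := key v
    have i1 := a₁ p p'
    have i2 := a₂ q q'
    simp only [LinearMap.BilinForm.restrict_apply, LinearMap.domRestrict_apply] at i1 i2
    simp [e₁, e₂, z1, z2, i1, i2]
  · obtain ⟨p, q, rfl⟩ := key u
    have i1 := congrArg Subtype.val (b₁ p)
    have i2 := congrArg Subtype.val (b₂ q)
    simp only [LinearMap.coe_restrict_apply] at i1 i2
    rw [map_add, map_add, map_add, map_add, e₁, e₂, ← i1, ← i2, ← e₁, ← e₂]
    rfl
  · rw [d, c₁, c₂, ← pow_add, add_assoc, pow_add, (Even.add_self _).neg_one_pow, mul_one]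

/-- Reduction to the indecomposable case. -/
lemma IsometryPair.induct
    (H : ∀ (E : Type) [AddCommGroup E] [Module A E] [Module.Finite A E]
      (B : LinearMap.BilinForm A E) (x x' : Module.End A E),
      IsometryPair B x x' → IsIndec B x x' → IsInverted B x x') (hx : IsometryPair B x x') :
    IsInverted B x x' := by
  induction hn : Module.finrank A E using Nat.strong_induction_on generalizing E with
  | _ n ih =>
  subst hn
  by_cases hi : IsIndec B x x'
  · exact H E B x x' hx hi
  unfold IsIndec at hi
  push Not at hi
  obtain ⟨W, h1, h2, h3, h4, h5⟩ := hi
  have hr : B.IsRefl := fun u v h => by rw [hx.symm, h]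
  let Q := B.orthogonal W
  have hQ : ∀ q, q ∈ Q ↔ ∀ p ∈ W, B p q = 0 := fun q => Iff.rfl
  have hc : IsCompl W Q := by
    refine (LinearMap.BilinForm.isCompl_orthogonal_iff_disjoint hr).2 ?_
    rw [Submodule.disjoint_def]
    exact fun u hu hu' => h3 u hu fun v hv => by rw [hx.symm]; exact (hQ u).1 hu' v hv
  have hQ1 : ∀ u ∈ Q, x u ∈ Q := fun u hu => (hQ _).2 fun p hp => by
    rw [← hx.adj']; exact (hQ u).1 hu _ (h2 p hp)
  have hQ2 : ∀ u ∈ Q, x' u ∈ Q := fun u hu => (hQ _).2 fun p hp => by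
    rw [← hx.adj]; exact (hQ u).1 hu _ (h1 p hp)
  have hQ3 : ∀ u ∈ Q, (∀ v ∈ Q, B u v = 0) → u = 0 := fun u hu hv => hx.nondeg u fun w => by
    obtain ⟨p, hp, q, hq, rfl⟩ := Submodule.mem_sup.1 (hc.sup_eq_top ▸ Submodule.mem_top : w ∈ W ⊔ Q)
    rw [map_add, hv q hq, hx.symm, (hQ u).1 hu p hp, add_zero]
  have sub : ∀ (V : Submodule A E) (k1 : ∀ u ∈ V, x u ∈ V) (k2 : ∀ u ∈ V, x' u ∈ V),
      (∀ u ∈ V, (∀ v ∈ V, B u v = 0) → u = 0) → V ≠ ⊤ →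
      IsInverted (B.restrict V) (x.restrict k1) (x'.restrict k2) := by
    intro V k1 k2 k3 k4
    refine ih _ (Submodule.finrank_lt k4) ⟨fun u v => hx.symm _ _, fun u hu => ?_,
      fun u v => hx.isom _ _, fun u => Subtype.ext (hx.left u), fun u => Subtype.ext (hx.right u)⟩ rfl
    exact Subtype.ext (k3 u u.2 fun v hv => hu ⟨v, hv⟩)
  refine isInverted_of_isCompl hx hc (fun p hp q hq => (hQ q).1 hq p hp) h1 h2 hQ1 hQ2
    (sub W h1 h2 h3 h5) (sub Q hQ1 hQ2 hQ3 fun h => h4 ?_)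
  have := hc.inf_eq_bot
  rwa [h, inf_top_eq] at this

/-- Fitting's lemma: a self-adjoint operator commuting with `x` decomposes `E` orthogonally. -/
lemma IsIndec.fitting (hi : IsIndec B x x') (hx : IsometryPair B x x') {s : Module.End A E}
    (hs : ∀ u v, B (s u) v = B u (s v)) (h1 : ∀ u, s (x u) = x (s u))
    (h2 : ∀ u, s (x' u) = x' (s u)) : IsNilpotent s ∨ Function.Bijective s := by
  obtain ⟨n, hn⟩ := Filter.eventually_atTop.1 (LinearMap.eventually_isCompl_ker_pow_range_pow s)
  have hc := hn (n + 1) (by omega)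
  have comm : ∀ (t : Module.End A E), (∀ u, s (t u) = t (s u)) → ∀ m u,
      (s ^ m) (t u) = t ((s ^ m) u) := fun t ht m u => by
    have : Commute s t := LinearMap.ext ht
    exact LinearMap.congr_fun (this.pow_left m) u
  have adj : ∀ m u v, B ((s ^ m) u) v = B u ((s ^ m) v) := fun m => by
    induction m with
    | zero => simp
    | succ m ih => intro u v; rw [pow_succ, Module.End.mul_apply, ih, hs, ← Module.End.mul_apply,
        ← pow_succ', pow_succ]
  have key : LinearMap.ker (s ^ (n + 1)) = ⊥ ∨ LinearMap.ker (s ^ (n + 1)) = ⊤ := by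
    refine hi _ (fun u hu => ?_) (fun u hu => ?_) fun u hu hv => hx.nondeg u fun w => ?_
    · rw [LinearMap.mem_ker] at *
      rw [comm x h1, hu, map_zero]
    · rw [LinearMap.mem_ker] at *
      rw [comm x' h2, hu, map_zero]
    · obtain ⟨p, hp, q, ⟨q', rfl⟩, rfl⟩ := Submodule.mem_sup.1
        (hc.sup_eq_top ▸ Submodule.mem_top : w ∈ _)
      rw [map_add, hv p hp, ← adj, LinearMap.mem_ker.1 hu]
      simp
  rcases key with h | h
  · right
    have : Function.Injective s := by
      rw [injective_iff_map_eq_zero]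
      intro u hu
      have : u ∈ LinearMap.ker (s ^ (n + 1)) := by
        simp [pow_succ, hu]
      simpa [h] using this
    exact ⟨this, LinearMap.injective_iff_surjective.1 this⟩
  · left
    exact ⟨n + 1, LinearMap.ker_eq_top.1 h⟩

/-! ### The case where `x - x⁻¹` is invertible -/

omit [Module.Finite A E] in
open Polynomial in
/-- If `π(y)^(k+1) = 0` with `π` irreducible, then `π(y)^k` lies in every nonzero ideal
of `A[y]`. -/
lemma exists_mul_eq_socle {y : Module.End A E} {π : A[X]} (hπ : Irreducible π) {k : ℕ}
    (hk : aeval y π ^ (k + 1) = 0) {a : A[X]} (ha : aeval y a ≠ 0) :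
    ∃ c : A[X], aeval y (a * c) = aeval y π ^ k := by
  have ha0 : a ≠ 0 := by rintro rfl; simp at ha
  obtain ⟨b, hab, hb⟩ := (FiniteMultiplicity.of_not_isUnit hπ.not_isUnit
    ha0).exists_eq_pow_mul_and_not_dvd
  generalize multiplicity π a = j at hab
  subst hab
  have hj : j ≤ k := by
    by_contra hj
    obtain ⟨i, rfl⟩ := Nat.exists_eq_add_of_le (show k + 1 ≤ j by omega)
    apply ha
    rw [pow_add, map_mul, map_mul, map_pow, hk, zero_mul, zero_mul]
  obtain ⟨i, rfl⟩ := Nat.exists_eq_add_of_le hj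
  obtain ⟨w, u, h⟩ : IsCoprime (π ^ (j + i + 1)) b := ((hπ.coprime_iff_not_dvd).2 hb).pow_left
  refine ⟨u * π ^ i, ?_⟩
  have : π ^ j * b * (u * π ^ i) = π ^ (j + i) - π ^ (j + i) * w * π ^ (j + i + 1) := by
    linear_combination π ^ (j + i) * h
  rw [this]
  simp [hk]

omit [Module.Finite A E] in
lemma exists_apply_self_ne_zero [CharZero A] {s : Module.End A E} (hx : IsometryPair B x x')
    (hs : ∀ u v, B (s u) v = B u (s v)) (h0 : s ≠ 0) : ∃ v, B (s v) v ≠ 0 := by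
  by_contra! h
  apply h0
  ext u
  refine hx.nondeg _ fun w => ?_
  have h1 := h (u + w)
  simp only [map_add, LinearMap.add_apply, h, zero_add, add_zero] at h1
  rw [hs w u, hx.symm w, ← two_mul] at h1
  exact (mul_eq_zero.1 h1).resolve_left two_ne_zero

omit [Module.Finite A E] in
lemma exists_pow_ne_zero_of_isNilpotent [Nontrivial E] {s : Module.End A E} (h : IsNilpotent s) :
    ∃ k, s ^ k ≠ 0 ∧ s ^ (k + 1) = 0 := by
  refine ⟨nilpotencyClass s - 1, pow_pred_nilpotencyClass h, ?_⟩
  rw [Nat.sub_add_cancel (pos_nilpotencyClass_iff.2 h)]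
  exact pow_nilpotencyClass h

open Polynomial in
lemma isInverted_of_bijective_sub [CharZero A] [Nontrivial E] (hx : IsometryPair B x x')
    (hi : IsIndec B x x') (hJ : Function.Bijective (x - x')) : IsInverted B x x' := by
  set J := x - x' with hJd
  set y := x + x' with hyd
  have Ja : ∀ u, J u = x u - x' u := fun u => rfl
  have ya : ∀ u, y u = x u + x' u := fun u => rfl
  have Jskew : ∀ u v, B (J u) v = - B u (J v) := fun u v => by
    simp [Ja, hx.adj, hx.adj']
  have yx : Commute y x := LinearMap.ext fun u => by simp [ya, hx.left, hx.right]
  have yx' : Commute y x' := LinearMap.ext fun u => by simp [ya, hx.left, hx.right]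
  have yJ : Commute y J := yx.sub_right yx'
  have ysymm : ∀ u v, B (y u) v = B u (y v) := fun u v => by
    simp [ya, hx.adj, hx.adj', add_comm]
  have comm : ∀ (a : A[X]) (t : Module.End A E), Commute y t → ∀ u,
      aeval y a (t u) = t (aeval y a u) := fun a t ht u => by
    have : Commute (aeval y a) t := by
      induction a using Polynomial.induction_on' with
      | add p q hp hq => rw [map_add]; exact hp.add_left hq
      | monomial n r =>
        rw [aeval_monomial]
        exact (show Commute (algebraMap A (Module.End A E) r) t from Algebra.commutes r t).mul_left (ht.pow_left n)
    exact LinearMap.congr_fun this u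
  have psymm : ∀ (a : A[X]) u v, B (aeval y a u) v = B u (aeval y a v) := fun a => by
    induction a using Polynomial.induction_on' with
    | add p q hp hq => intro u v; simp [hp, hq]
    | monomial n r =>
      have : ∀ u v, B ((y ^ n) u) v = B u ((y ^ n) v) := by
        induction n with
        | zero => simp
        | succ m ih => intro u v; rw [pow_succ, Module.End.mul_apply, ih, ysymm,
            ← Module.End.mul_apply, ← pow_succ', pow_succ]
      intro u v; simp [aeval_monomial, this]
  have JJ : ∀ u, J (J u) = y (y u) - (4 : A) • u := fun u => by
    simp only [Ja, ya, map_sub, map_add, hx.left, hx.right]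
    module
  -- an irreducible factor of the minimal polynomial of `y` is nilpotent at `y`
  obtain ⟨π, hπ, ρ, hρ⟩ := WfDvdMonoid.exists_irreducible_factor
    (minpoly.not_isUnit A y) (minpoly.ne_zero (Algebra.IsIntegral.isIntegral y))
  have hnil : IsNilpotent (aeval y π) := by
    refine (hi.fitting hx (psymm π) (comm π x yx) (comm π x' yx')).resolve_right fun hb => ?_
    have h0 : aeval y ρ = 0 := by
      ext u
      apply hb.1
      rw [← Module.End.mul_apply, ← map_mul, ← hρ, minpoly.aeval]
      simp
    have h1 := minpoly.dvd A y h0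
    have hm0 := minpoly.ne_zero (Algebra.IsIntegral.isIntegral (R := A) y)
    rw [hρ] at h1 hm0
    obtain ⟨c, hc⟩ := h1
    refine hπ.not_isUnit (IsUnit.of_mul_eq_one c ?_)
    refine mul_left_cancel₀ (right_ne_zero_of_mul hm0) ?_
    linear_combination -hc
  obtain ⟨k, hk0, hk⟩ := exists_pow_ne_zero_of_isNilpotent hnil
  obtain ⟨v, hv⟩ := exists_apply_self_ne_zero hx
    (by simpa only [map_pow] using psymm (π ^ k)) hk0
  let T : A[X] →ₗ[A] E := (LinearMap.applyₗ v) ∘ₗ (aeval y).toLinearMap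
  have Ta : ∀ a, T a = aeval y a v := fun a => rfl
  set V := LinearMap.range T with hV
  have mV : ∀ a, aeval y a v ∈ V := fun a => ⟨a, rfl⟩
  have yV : ∀ u ∈ V, y u ∈ V := by
    rintro _ ⟨a, rfl⟩
    refine ⟨X * a, ?_⟩
    simp [Ta]
  have JV : ∀ u ∈ V, J (J u) ∈ V := fun u hu => by
    rw [JJ]; exact V.sub_mem (yV _ (yV _ hu)) (V.smul_mem _ hu)
  have ndV : ∀ u ∈ V, (∀ w ∈ V, B u w = 0) → u = 0 := by
    rintro _ ⟨a, rfl⟩ h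
    by_contra hne
    obtain ⟨c, hc⟩ := exists_mul_eq_socle hπ hk (a := a) (by rintro h0; simp [Ta, h0] at hne)
    apply hv
    rw [← hc, mul_comm, map_mul, Module.End.mul_apply, psymm]
    exact h _ (mV c)
  -- `J` is skew-adjoint and commutes with the self-adjoint operators `a(y)`
  have VJV : ∀ u ∈ V, ∀ w ∈ V, B u (J w) = 0 := by
    rintro _ ⟨a, rfl⟩ _ ⟨b, rfl⟩
    rw [Ta, Ta]
    have h1 : B (aeval y a v) (J (aeval y b v)) = B v (J (aeval y (a * b) v)) := by
      rw [psymm, comm a J yJ, map_mul, Module.End.mul_apply]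
    have h2 : B v (J (aeval y (a * b) v)) = - B v (J (aeval y (a * b) v)) := by
      conv_lhs => rw [hx.symm, Jskew, psymm, comm (a * b) J yJ]
    rw [h1]
    exact self_eq_neg.1 h2
  have JVJV : ∀ u ∈ V, ∀ w ∈ V, B (J u) w = 0 := fun u hu w hw => by
    rw [Jskew, VJV u hu w hw, neg_zero]
  set Q := V.map J with hQd
  have ndW : ∀ u ∈ V ⊔ Q, (∀ w ∈ V ⊔ Q, B u w = 0) → u = 0 := by
    intro u hu h
    obtain ⟨p, hp, _, ⟨q, hq, rfl⟩, rfl⟩ := Submodule.mem_sup.1 hu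
    have hp0 : p = 0 := ndV p hp fun w hw => by
      have := h w (Submodule.mem_sup_left hw)
      rwa [map_add, LinearMap.add_apply, JVJV q hq w hw, add_zero] at this
    subst hp0
    have hq0 : J (J q) = 0 := ndV _ (JV q hq) fun w hw => by
      have := h (J w) (Submodule.mem_sup_right ⟨w, hw, rfl⟩)
      rw [zero_add] at this
      rw [Jskew, this, neg_zero]
    have hq1 : q = 0 := hJ.1 (hJ.1 (by rw [hq0]; simp))
    simp [hq1]
  have hx2 : ∀ u, x u = (2⁻¹ : A) • (y u + J u) := fun u => by
    rw [ya, Ja, eq_inv_smul_iff₀ two_ne_zero]; module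
  have hx2' : ∀ u, x' u = (2⁻¹ : A) • (y u - J u) := fun u => by
    rw [ya, Ja, eq_inv_smul_iff₀ two_ne_zero]; module
  have yW : ∀ u ∈ V ⊔ Q, y u ∈ V ⊔ Q := fun u hu => by
    obtain ⟨p, hp, _, ⟨q, hq, rfl⟩, rfl⟩ := Submodule.mem_sup.1 hu
    rw [map_add]
    refine Submodule.add_mem_sup (yV p hp) ⟨y q, yV q hq, ?_⟩
    exact (LinearMap.congr_fun yJ q).symm
  have JW : ∀ u ∈ V ⊔ Q, J u ∈ V ⊔ Q := fun u hu => by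
    obtain ⟨p, hp, _, ⟨q, hq, rfl⟩, rfl⟩ := Submodule.mem_sup.1 hu
    rw [map_add, add_comm]
    exact Submodule.add_mem_sup (JV q hq) ⟨p, hp, rfl⟩
  have hsup : V ⊔ Q = ⊤ := by
    refine (hi _ (fun u hu => ?_) (fun u hu => ?_) ndW).resolve_left fun h => hv ?_
    · rw [hx2]; exact Submodule.smul_mem _ _ (Submodule.add_mem _ (yW u hu) (JW u hu))
    · rw [hx2']; exact Submodule.smul_mem _ _ (Submodule.sub_mem _ (yW u hu) (JW u hu))
    · have : v ∈ V ⊔ Q := Submodule.mem_sup_left ⟨1, by simp [Ta]⟩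
      rw [h, Submodule.mem_bot] at this
      simp [this]
  have hc : IsCompl V Q := by
    refine ⟨?_, codisjoint_iff.2 hsup⟩
    rw [Submodule.disjoint_def]
    rintro u hu ⟨q, hq, rfl⟩
    exact ndV _ hu fun w hw => JVJV q hq w hw
  obtain ⟨g, g1, g2, gd⟩ := exists_glue hc 1 (-1)
  have g1' : ∀ p ∈ V, g p = p := fun p hp => by simpa using g1 ⟨p, hp⟩
  have g2' : ∀ p ∈ V, g (J p) = - J p := fun p hp => by simpa using g2 ⟨J p, ⟨p, hp, rfl⟩⟩
  have key : ∀ u, ∃ p ∈ V, ∃ q ∈ V, u = p + J q := fun u => by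
    obtain ⟨p, hp, _, ⟨q, hq, rfl⟩, rfl⟩ := Submodule.mem_sup.1
      (hsup ▸ Submodule.mem_top : u ∈ V ⊔ Q)
    exact ⟨p, hp, q, hq, rfl⟩
  refine ⟨g, fun u w => ?_, fun u => ?_, ?_⟩
  · obtain ⟨p, hp, q, hq, rfl⟩ := key u
    obtain ⟨p', hp', q', hq', rfl⟩ := key w
    simp [g1' p hp, g1' p' hp', g2' q hq, g2' q' hq', VJV _ hp _ hq', JVJV _ hq _ hp']
  · obtain ⟨p, hp, q, hq, rfl⟩ := key u
    have e : y (J q) = J (y q) := LinearMap.congr_fun yJ q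
    simp only [hx2, hx2', map_add, map_smul, e, g1' p hp, g2' q hq, g1' _ (yV p hp),
      g2' p hp, g2' _ (yV q hq), g1' _ (JV q hq), map_neg]
    module
  · have hf : Module.finrank A Q = Module.finrank A V :=
      (Submodule.equivMapOfInjective J hJ.1 V).finrank_eq.symm
    have hn := Submodule.finrank_add_eq_of_isCompl hc
    have h1 : (-1 : Module.End A Q) = (-1 : A) • (LinearMap.id : Module.End A Q) := by
      ext; simp
    have h2 : LinearMap.det (1 : Module.End A V) = 1 := map_one _
    rw [gd, h1, LinearMap.det_smul, LinearMap.det_id, h2, ← hn, hf]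
    simp only [one_mul, mul_one]
    congr 1; omega

/-! ### The unipotent case -/

omit [Module.Finite A E] in
/-- Triangularity of Jordan chains `N^i v_e`, `i ≤ k`, of equal length: a vector of their span is
determined by functionals `φ_f` pairing perfectly with the ends `N^k v_e` of the chains. -/
lemma chain_triangular {ι : Type} [Fintype ι] {N : Module.End A E} {k : ℕ} (hN : N ^ (k + 1) = 0)
    (v : ι → E) (φ : ι → E →ₗ[A] A)
    (G : ∀ c : ι → A, (∀ f, ∑ e, c e * φ f ((N ^ k) (v e)) = 0) → c = 0)
    (α : ι × Fin (k + 1) → A)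
    (h : ∀ (j : ℕ) f, φ f ((N ^ j) (∑ p, α p • (N ^ (p.2 : ℕ)) (v p.1))) = 0) : α = 0 := by
  have hbig : ∀ m, k < m → N ^ m = 0 := fun m hm => pow_eq_zero_of_le hm hN
  have main : ∀ i (hi : i < k + 1), ∀ e, α (e, ⟨i, hi⟩) = 0 := by
    intro i
    induction i using Nat.strong_induction_on with
    | _ i ih =>
    intro hi e
    refine congrFun (G (fun e => α (e, ⟨i, hi⟩)) fun f => ?_) e
    rw [← h (k - i) f, map_sum, map_sum, Fintype.sum_prod_type]
    refine Finset.sum_congr rfl fun e _ => ?_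
    rw [Finset.sum_eq_single ⟨i, hi⟩]
    · rw [map_smul, map_smul, smul_eq_mul, ← Module.End.mul_apply, ← pow_add,
        Nat.sub_add_cancel (by omega)]
    · rintro ⟨j, hj⟩ _ hne
      have hne' : j ≠ i := fun h => hne (Fin.ext h)
      rcases lt_or_gt_of_ne hne' with hlt | hgt
      · rw [ih j hlt hj e]; simp
      · rw [map_smul, ← Module.End.mul_apply, ← pow_add, hbig _ (by simp only; omega)]
        simp
    · simp
  ext ⟨e, i⟩
  exact main i i.2 e

omit [Module.Finite A E] in
lemma chain_linearIndependent {ι : Type} [Fintype ι] {N : Module.End A E} {k : ℕ}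
    (hN : N ^ (k + 1) = 0) (v : ι → E) (φ : ι → E →ₗ[A] A)
    (G : ∀ c : ι → A, (∀ f, ∑ e, c e * φ f ((N ^ k) (v e)) = 0) → c = 0) :
    LinearIndependent A fun p : ι × Fin (k + 1) => (N ^ (p.2 : ℕ)) (v p.1) := by
  rw [Fintype.linearIndependent_iff]
  intro α h p
  rw [chain_triangular hN v φ G α fun j f => by rw [h]; simp]
  rfl

omit [Module.Finite A E] in
lemma skew_pow {N : Module.End A E} (hs : ∀ u v, B (N u) v = - B u (N v)) (m : ℕ) (u v : E) :
    B ((N ^ m) u) v = (-1) ^ m * B u ((N ^ m) v) := by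
  induction m generalizing u v with
  | zero => simp
  | succ m ih =>
    rw [pow_succ, Module.End.mul_apply, ih, hs, ← Module.End.mul_apply, ← pow_succ', pow_succ,
      pow_succ]
    ring

omit [Module.Finite A E] in
/-- The span of the chains `N^i v_e` is `N`-stable and non-degenerate, hence everything if `E` is
indecomposable under `N`. The diagonal operator with entries `(-1)^i ε_e` in that basis anticommutes
with `N`, and the parity condition `hε` makes it an isometry. -/
lemma exists_anticommuting {ι : Type} [Fintype ι] [DecidableEq ι] [Nonempty ι]
    (hsymm : ∀ u v, B u v = B v u)
    {N : Module.End A E} (hs : ∀ u v, B (N u) v = - B u (N v))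
    (hi : ∀ W : Submodule A E, (∀ u ∈ W, N u ∈ W) →
      (∀ u ∈ W, (∀ v ∈ W, B u v = 0) → u = 0) → W = ⊥ ∨ W = ⊤)
    {k : ℕ} (hN : N ^ (k + 1) = 0) (v : ι → E) (ε : ι → A)
    (hε : ∀ m e f, B ((N ^ m) (v e)) (v f) ≠ 0 → (-1) ^ m * (ε e * ε f) = 1)
    (G : ∀ c : ι → A, (∀ f, ∑ e, c e * B ((N ^ k) (v e)) (v f) = 0) → c = 0) :
    ∃ g : Module.End A E, (∀ u v, B (g u) (g v) = B u v) ∧ (∀ u, g (N u) = - N (g u)) ∧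
      LinearMap.det g = ∏ e, ∏ i : Fin (k + 1), (-1) ^ (i : ℕ) * ε e ∧
      Module.finrank A E = Fintype.card ι * (k + 1) := by
  have G' : ∀ c : ι → A, (∀ f, ∑ e, c e * B (v f) ((N ^ k) (v e)) = 0) → c = 0 := fun c hc =>
    G c fun f => by simpa only [hsymm (v f)] using hc f
  have tri := chain_triangular hN v (fun f => B (v f)) G'
  have li := chain_linearIndependent hN v (fun f => B (v f)) G'
  let w : ι × Fin (k + 1) → E := fun p => (N ^ (p.2 : ℕ)) (v p.1)
  have Nw : ∀ p : ι × Fin (k + 1), ∀ (m : ℕ), (N ^ m) (w p) ∈ Submodule.span A (Set.range w) := by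
    rintro ⟨e, i⟩ m
    by_cases hm : m + i < k + 1
    · refine Submodule.subset_span ⟨(e, ⟨m + i, hm⟩), ?_⟩
      simp [w, pow_add]
    · have : (N ^ m) (w (e, i)) = 0 := by
        simp only [w]
        rw [← Module.End.mul_apply, ← pow_add, pow_eq_zero_of_le (not_lt.1 hm) hN]; simp
      rw [this]; exact Submodule.zero_mem _
  have htop : Submodule.span A (Set.range w) = ⊤ := by
    refine (hi _ (fun u hu => ?_) (fun u hu h => ?_)).resolve_left fun h => ?_
    · induction hu using Submodule.span_induction with
      | mem u hu => obtain ⟨p, rfl⟩ := hu; simpa using Nw p 1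
      | zero => simp
      | add u u' _ _ a b => rw [map_add]; exact Submodule.add_mem _ a b
      | smul c u _ a => rw [map_smul]; exact Submodule.smul_mem _ c a
    · obtain ⟨α, rfl⟩ := (Submodule.mem_span_range_iff_exists_fun A).1 hu
      have : α = 0 := tri α fun j f => by
        by_cases hj : j < k + 1
        · have := h (w (f, ⟨j, hj⟩)) (Submodule.subset_span ⟨_, rfl⟩)
          rw [hsymm, skew_pow hs] at this
          exact (mul_eq_zero.1 this).resolve_left (pow_ne_zero _ (neg_ne_zero.2 one_ne_zero))
        · rw [pow_eq_zero_of_le (not_lt.1 hj) hN]; simp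
      simp [this]
    · obtain ⟨e⟩ := ‹Nonempty ι›
      have h0 : w (e, 0) ∈ Submodule.span A (Set.range w) := Submodule.subset_span ⟨_, rfl⟩
      rw [h, Submodule.mem_bot] at h0
      exact li.ne_zero (e, 0) h0
  let b : Module.Basis (ι × Fin (k + 1)) A E := Module.Basis.mk li htop.ge
  have bw : ∀ p, b p = w p := fun p => by simp [b, w]
  let d : ι × Fin (k + 1) → A := fun p => (-1) ^ (p.2 : ℕ) * ε p.1
  let g := Matrix.toLin b b (Matrix.diagonal d)
  have gb : ∀ p, g (b p) = d p • b p := fun p => by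
    simp [g, Matrix.toLin_self, Matrix.diagonal_apply]
  have hBB : ∀ p q, B (w p) (w q) ≠ 0 → d p * d q = 1 := by
    rintro ⟨e, i⟩ ⟨f, j⟩ h
    simp only [w] at h
    have h' : B ((N ^ ((j : ℕ) + i)) (v e)) (v f) ≠ 0 := by
      intro h0
      rw [pow_add, Module.End.mul_apply, skew_pow hs] at h0
      exact h ((mul_eq_zero.1 h0).resolve_left (pow_ne_zero _ (neg_ne_zero.2 one_ne_zero)))
    have := hε _ e f h'
    rw [← this]
    simp only [d, pow_add]; ring
  refine ⟨g, fun u u' => ?_, fun u => ?_, ?_, ?_⟩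
  · have : B.compl₁₂ g g = B := by
      refine LinearMap.ext_basis b b fun p q => ?_
      simp only [LinearMap.compl₁₂_apply, gb, map_smul, LinearMap.smul_apply, smul_eq_mul]
      rw [bw, bw]
      by_cases h : B (w p) (w q) = 0
      · simp [h]
      · linear_combination B (w p) (w q) * hBB p q h
    exact LinearMap.congr_fun₂ this u u'
  · have : g ∘ₗ N = - (N ∘ₗ g) := by
      refine b.ext fun p => ?_
      obtain ⟨e, i⟩ := p
      simp only [LinearMap.comp_apply, LinearMap.neg_apply, gb, map_smul]
      by_cases hm : (i : ℕ) + 1 < k + 1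
      · have : N (b (e, i)) = b (e, ⟨i + 1, hm⟩) := by
          simp [bw, w, pow_succ']
        rw [this, gb, ← neg_smul]
        congr 1
        simp [d, pow_succ]
      · have : N (b (e, i)) = 0 := by
          rw [bw]; simp only [w]
          rw [← Module.End.mul_apply, ← pow_succ', pow_eq_zero_of_le (not_lt.1 hm) hN]; simp
        simp [this]
    exact LinearMap.congr_fun this u
  · rw [LinearMap.det_toLin, Matrix.det_diagonal, Fintype.prod_prod_type]
  · rw [Module.finrank_eq_card_basis b]; simp

/-- If `x - 1` is nilpotent, the Cayley transform `N = (x - 1) / (x + 1)` is a nilpotent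
skew-adjoint operator. Subspaces stable under `N` are stable under `x` and `x⁻¹`, and an operator
anticommuting with `N` inverts `x`. -/
lemma exists_cayley [CharZero A] (hx : IsometryPair B x x') (hn : IsNilpotent (x - 1)) :
    ∃ N : Module.End A E, IsNilpotent N ∧ (∀ u v, B (N u) v = - B u (N v)) ∧
      (∀ W : Submodule A E, (∀ u ∈ W, N u ∈ W) → (∀ u ∈ W, x u ∈ W) ∧ ∀ u ∈ W, x' u ∈ W) ∧
      ∀ g : Module.End A E, (∀ u, g (N u) = - N (g u)) → ∀ u, g (x u) = x' (g u) := by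
  have hu : IsUnit (x + 1) := by
    have h2 : IsUnit (2 : Module.End A E) := by
      have : (2 : Module.End A E) = algebraMap A _ 2 := (map_ofNat _ 2).symm
      rw [this]
      exact (isUnit_iff_ne_zero.2 two_ne_zero).map _
    have e : x + 1 = (x - 1) + 2 := by rw [← one_add_one_eq_two]; abel
    rw [e]
    exact hn.isUnit_add_right_of_commute h2 (Commute.ofNat_right _ 2)
  obtain ⟨⟨S, T, ST, TS⟩, hS⟩ := hu
  change S = x + 1 at hS
  subst hS
  have ST' : ∀ u, x (T u) + T u = u := fun u => LinearMap.congr_fun ST u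
  have TS' : ∀ u, T (x u) + T u = u := fun u => by
    rw [← map_add]; exact LinearMap.congr_fun TS u
  have Tx : Commute T x := LinearMap.ext fun u => by
    have := (ST' u).trans (TS' u).symm
    exact (add_right_cancel this).symm
  have Tx' : ∀ u, T (x u) = x (T u) := LinearMap.congr_fun Tx
  have Tinj : Function.Injective T := fun u w h => by rw [← ST' u, ← ST' w, h]
  have xinj : Function.Injective x := fun u w h => by rw [← hx.left u, ← hx.left w, h]
  have inv : ∀ (f : Module.End A E), Function.Injective f → ∀ W : Submodule A E,
      (∀ u ∈ W, f u ∈ W) → ∀ u ∈ W, ∃ w ∈ W, f w = u := fun f hf W h u hu => by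
    have h1 : W.map f ≤ W := by rintro _ ⟨w, hw, rfl⟩; exact h w hw
    have h2 := Submodule.eq_of_le_of_finrank_eq h1
      (Submodule.equivMapOfInjective f hf W).finrank_eq.symm
    rw [← h2] at hu
    exact hu
  have Na : ∀ u, (T * (x - 1)) u = u - (2 : A) • T u := fun u => by
    have : (T * (x - 1)) u = T (x u) - T u := by simp
    rw [this, eq_sub_of_add_eq (TS' u)]; module
  refine ⟨T * (x - 1), ?_, fun u w => ?_, fun W hW => ?_, fun g hg u => ?_⟩
  · exact Commute.isNilpotent_mul_left (Tx.sub_right (Commute.one_right T)) hn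
  · rw [Na, Na]
    have key : ∀ a b : E, B (x a + a - (2 : A) • a) (x b + b) =
        - B (x a + a) (x b + b - (2 : A) • b) := fun a b => by
      simp only [map_add, map_sub, map_smul, LinearMap.add_apply, LinearMap.sub_apply,
        LinearMap.smul_apply, hx.isom, smul_eq_mul]
      ring
    have := key (T u) (T w)
    rwa [ST', ST'] at this
  · have TW : ∀ u ∈ W, T u ∈ W := fun u hu => by
      have : T u = (2⁻¹ : A) • (u - (T * (x - 1)) u) := by
        rw [Na, eq_inv_smul_iff₀ two_ne_zero]; module
      rw [this]; exact W.smul_mem _ (W.sub_mem hu (hW u hu))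
    have xW : ∀ u ∈ W, x u ∈ W := fun u hu => by
      obtain ⟨w, hw, rfl⟩ := inv T Tinj W TW u hu
      have : x (T w) = w - T w := eq_sub_of_add_eq (ST' w)
      rw [this]; exact W.sub_mem hw (TW w hw)
    refine ⟨xW, fun u hu => ?_⟩
    obtain ⟨w, hw, rfl⟩ := inv x xinj W xW u hu
    rwa [hx.left]
  · -- `1 - N = 2T` and `1 + N = 2xT`, so `g T = x T g`
    have gT : ∀ u, g (T u) = x (T (g u)) := fun u => by
      have h1 := hg u
      rw [Na, Na, map_sub, map_smul] at h1
      have h2 : (2 : A) • g (T u) = (2 : A) • x (T (g u)) := by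
        have h3 : x (T (g u)) = g u - T (g u) := eq_sub_of_add_eq (ST' _)
        rw [h3, ← sub_eq_zero]
        rw [← sub_eq_zero] at h1
        rw [← neg_eq_zero, ← h1]; module
      exact smul_right_injective E (two_ne_zero (α := A)) h2
    have gxT : ∀ u, g (x (T u)) = T (g u) := fun u => by
      have h3 : x (T u) = u - T u := eq_sub_of_add_eq (ST' _)
      rw [h3, map_sub, gT]
      nth_rw 1 [← ST' (g u)]
      abel
    have hu : u = T (x u + u) := by rw [map_add, TS']
    rw [hu, gxT, gT, hx.left]

omit [Module.Finite A E] in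
/-- The generator `w` of a second Jordan chain, orthogonal to every `N^m v` but the last nonzero
one. It exists because the `N^m v`, `m ≤ k`, are linearly independent and `B` is non-degenerate. -/
lemma exists_dual_chain [Module.Finite A E] (hx : IsometryPair B x x') {N : Module.End A E} {k : ℕ}
    (hN : N ^ (k + 1) = 0) {v : E} (hv : (N ^ k) v ≠ 0) :
    ∃ w, B ((N ^ k) v) w = 1 ∧ ∀ m, m ≠ k → B ((N ^ m) v) w = 0 := by
  obtain ⟨w₀, hw₀⟩ : ∃ w₀, B ((N ^ k) v) w₀ ≠ 0 := by
    by_contra! h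
    exact hv (hx.nondeg _ h)
  have li := chain_linearIndependent (ι := Unit) hN (fun _ => v) (fun _ => B w₀) (by
    intro c hc
    have := hc ()
    rw [Fintype.sum_unique, hx.symm] at this
    ext u
    exact (mul_eq_zero.1 this).resolve_right hw₀)
  let b := Module.Basis.span li
  obtain ⟨f, hf⟩ := LinearMap.exists_extend
    (b.constr A fun p : Unit × Fin (k + 1) => if (p.2 : ℕ) = k then (1 : A) else 0)
  have hfv : ∀ i (hi : i < k + 1), f ((N ^ i) v) = if i = k then 1 else 0 := fun i hi => by
    have h1 := LinearMap.congr_fun hf (b ((), ⟨i, hi⟩))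
    rw [Module.Basis.constr_basis, LinearMap.comp_apply] at h1
    rw [← h1]
    simp [b, Module.Basis.span_apply]
  have hinj : Function.Injective B := by
    rw [injective_iff_map_eq_zero]
    exact fun u hu => hx.nondeg u fun w => by rw [hu]; rfl
  obtain ⟨w, hw⟩ := (LinearMap.injective_iff_surjective_of_finrank_eq_finrank
    (Subspace.dual_finrank_eq (K := A) (V := E)).symm).1 hinj f
  refine ⟨w, ?_, fun m hm => ?_⟩
  · rw [hx.symm, hw, hfv k (by omega), if_pos rfl]
  · by_cases hm' : m < k + 1
    · rw [hx.symm, hw, hfv m hm', if_neg hm]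
    · rw [pow_eq_zero_of_le (not_lt.1 hm') hN]; simp

lemma isInverted_of_unipotent [CharZero A] [Nontrivial E] (hx : IsometryPair B x x')
    (hi : IsIndec B x x') (hn : IsNilpotent (x - 1)) : IsInverted B x x' := by
  obtain ⟨N, Nnil, Nskew, NW, Ng⟩ := exists_cayley hx hn
  obtain ⟨k, hk0, hk⟩ := exists_pow_ne_zero_of_isNilpotent Nnil
  have hi' : ∀ W : Submodule A E, (∀ u ∈ W, N u ∈ W) →
      (∀ u ∈ W, (∀ v ∈ W, B u v = 0) → u = 0) → W = ⊥ ∨ W = ⊤ :=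
    fun W h1 h2 => hi W (NW W h1).1 (NW W h1).2 h2
  have hsk := skew_pow (B := B) Nskew
  have self : ∀ m v, B ((N ^ m) v) v ≠ 0 → (-1 : A) ^ m = 1 := fun m v h => by
    have h1 := hsk m v v
    rw [hx.symm v] at h1
    exact mul_right_cancel₀ h (by rw [← h1, one_mul])
  rcases Nat.even_or_odd k with he | ho
  · obtain ⟨v, hv⟩ := exists_apply_self_ne_zero hx (s := N ^ k)
      (fun u w => by rw [hsk, he.neg_one_pow, one_mul]) hk0
    obtain ⟨g, g1, g2, g3, g4⟩ := exists_anticommuting (ι := Unit) hx.symm Nskew hi' hk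
      (fun _ => v) (fun _ => 1) (fun m _ _ h => by rw [self m v h]; simp) (by
        intro c hc
        have := hc ()
        rw [Fintype.sum_unique] at this
        ext u
        exact (mul_eq_zero.1 this).resolve_right hv)
    refine isInverted_of_sign g1 (Ng g g2) ?_ ?_ _ (neg_one_pow_eq_or A _)
    · rw [g4]; simpa using he.add_one
    · rw [g3]
      simp only [mul_one, Finset.univ_unique, Finset.prod_pow_eq_pow_sum]
      exact neg_one_pow_eq_or A _
  · obtain ⟨v, hv⟩ : ∃ v, (N ^ k) v ≠ 0 := by
      by_contra! h
      exact hk0 (LinearMap.ext h)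
    obtain ⟨w, hw1, hw0⟩ := exists_dual_chain hx hk hv
    have hwv : ∀ m, B ((N ^ m) w) v = (-1) ^ m * B ((N ^ m) v) w := fun m => by
      rw [hsk, hx.symm w]
    have hself : ∀ u, B ((N ^ k) u) u = 0 := fun u => by
      by_contra h
      have := self k u h
      rw [ho.neg_one_pow] at this
      exact neg_ne_self.2 (one_ne_zero (α := A)) this
    obtain ⟨g, g1, g2, g3, g4⟩ := exists_anticommuting (ι := Bool) hx.symm Nskew hi' hk
      (fun e => bif e then v else w) (fun e => bif e then 1 else -1) (by
        intro m e f h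
        have hm : B ((N ^ m) v) w ≠ 0 → m = k := fun h => by
          by_contra hm
          exact h (hw0 m hm)
        cases e <;> cases f
        · simpa using self m w h
        · simp only [cond_true, cond_false, hwv] at h
          rw [hm (right_ne_zero_of_mul h), ho.neg_one_pow]; simp
        · rw [hm h, ho.neg_one_pow]; simp
        · simpa using self m v h) (by
        intro c hc
        have h1 := hc true
        have h2 := hc false
        simp [hself, hwv, hw1, ho.neg_one_pow] at h1 h2
        ext e
        cases e
        · exact h1
        · exact h2)
    refine ⟨g, g1, Ng g g2, ?_⟩
    rw [g3, g4]
    have hk1 : Even (k + 1) := ho.add_one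
    have e1 : (Fintype.card Bool * (k + 1) + 1) / 2 = k + 1 := by simp; omega
    rw [e1, hk1.neg_one_pow]
    simp only [Fintype.prod_bool, Finset.prod_mul_distrib, cond_true,
      cond_false, Finset.prod_const, Finset.card_univ, Fintype.card_fin, hk1.neg_one_pow, one_pow,
      mul_one]
    rw [Finset.prod_pow_eq_pow_sum, Fintype.card_bool, ← pow_mul, mul_comm, pow_mul, neg_one_sq,
      one_pow]

/-! ### Inverting isometries in general -/

/-- Every isometry is inverted by an isometry of determinant `(-1)^⌊(dim E + 1)/2⌋`. -/
lemma IsometryPair.isInverted [CharZero A] (hx : IsometryPair B x x') : IsInverted B x x' := by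
  refine hx.induct fun E _ _ _ B x x' hx hi => ?_
  rcases subsingleton_or_nontrivial E with hE | hE
  · refine ⟨1, by simp, fun u => Subsingleton.elim _ _, ?_⟩
    simp [Module.finrank_zero_of_subsingleton]
  -- used for `c = 2` and `c = -2`, since `(x - x')² = (x + x' - 2)(x + x' + 2)`
  have fit : ∀ c : A, IsNilpotent (x + x' - c • (1 : Module.End A E)) ∨
      Function.Bijective (x + x' - c • (1 : Module.End A E)) := fun c => by
    refine hi.fitting hx (fun u v => ?_) (fun u => ?_) (fun u => ?_)
    · simp [hx.adj, hx.adj', add_comm]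
    · simp [hx.left, hx.right]
    · simp [hx.left, hx.right]
  -- `x (x + x' - 2) = (x - 1)²`
  have uni : ∀ (x x' : Module.End A E), IsometryPair B x x' →
      IsNilpotent (x + x' - (2 : A) • (1 : Module.End A E)) → IsNilpotent (x - 1) := by
    intro x x' hx h
    have e : (x - 1) ^ 2 = x * (x + x' - (2 : A) • (1 : Module.End A E)) := by
      ext u
      simp only [pow_two, Module.End.mul_apply, LinearMap.sub_apply, Module.End.one_apply, map_sub,
        LinearMap.add_apply, LinearMap.smul_apply, map_add, map_smul, hx.right]
      module
    have c : Commute x (x + x' - (2 : A) • (1 : Module.End A E)) := by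
      refine LinearMap.ext fun u => ?_
      simp [hx.left, hx.right]
    rw [← IsNilpotent.pow_iff_pos (n := 2) two_ne_zero, e]
    exact c.isNilpotent_mul_left h
  rcases fit 2 with h | h
  · exact isInverted_of_unipotent hx hi (uni x x' hx h)
  rcases fit (-2) with h' | h'
  · have hn : IsNilpotent (-x - 1) := by
      refine uni (-x) (-x') hx.neg ?_
      have e : -x + -x' - (2 : A) • (1 : Module.End A E) =
          -(x + x' - (-2 : A) • (1 : Module.End A E)) := by
        module
      rw [e]
      exact h'.neg
    obtain ⟨g, g1, g2, g3⟩ := isInverted_of_unipotent hx.neg (fun W h1 h2 => hi W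
      (fun u hu => by simpa using W.neg_mem (h1 u hu))
      (fun u hu => by simpa using W.neg_mem (h2 u hu))) hn
    exact ⟨g, g1, fun u => by simpa using g2 u, g3⟩
  · refine isInverted_of_bijective_sub hx hi ?_
    have e : ∀ u, (x - x') ((x - x') u) = (x + x' - (2 : A) • (1 : Module.End A E))
        ((x + x' - (-2 : A) • (1 : Module.End A E)) u) := fun u => by
      simp only [LinearMap.sub_apply, Module.End.one_apply, map_sub,
        LinearMap.add_apply, LinearMap.smul_apply, map_add, map_smul, hx.right, hx.left]
      module
    have hinj : Function.Injective (x - x') := by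
      intro u v huv
      apply h'.1
      apply h.1
      rw [← e, ← e, huv]
    exact ⟨hinj, LinearMap.injective_iff_surjective.1 hinj⟩

end Inversion

/-- Let `E` be a quadratic space over a field `A` of characteristic zero, and
`SŎ(E) = {(g, δ) ∈ O(E) × {±1} : det g = δ^⌊(dim E + 1)/2⌋}`.  Then `SŎ(E)` is a
subgroup of `O(E) × {±1}` containing `SO(E) × {1}` as a subgroup of index two (when
`E ≠ 0`, i.e. the projection to `{±1}` is onto with kernel `SO(E) × {1}`), and for every
`x ∈ SO(E)` there is `(g, -1) ∈ SŎ(E) \ SO(E)` with `g x g⁻¹ = x⁻¹`. -/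
theorem sobreve_subgroup_and_conjugation (A : Type) [Field A] [CharZero A]
    (E : Type) [AddCommGroup E] [Module A E] [Module.Finite A E]
    (B : E → E → A)
    (hsymm : ∀ u v, B u v = B v u)
    (hadd : ∀ u u' v, B (u + u') v = B u v + B u' v)
    (hsmul : ∀ (a : A) (u v : E), B (a • u) v = a * B u v)
    (hnondeg : ∀ u, (∀ v, B u v = 0) → u = 0) :
    -- SŎ(E) is a subgroup of O(E) × {±1}
    (1 : (E ≃ₗ[A] E) × Aˣ) ∈ SObreve A E B ∧
    (∀ p q : (E ≃ₗ[A] E) × Aˣ,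
      p ∈ SObreve A E B → q ∈ SObreve A E B → p * q ∈ SObreve A E B) ∧
    (∀ p : (E ≃ₗ[A] E) × Aˣ, p ∈ SObreve A E B → p⁻¹ ∈ SObreve A E B) ∧
    -- it contains SO(E) × {1}
    (∀ g : E ≃ₗ[A] E, (∀ u v, B (g u) (g v) = B u v) →
      LinearMap.det (g : E →ₗ[A] E) = 1 → (g, 1) ∈ SObreve A E B) ∧
    -- index two: when E is nonzero there is an element over δ = -1
    (Nontrivial E → ∃ g : E ≃ₗ[A] E, (g, -1) ∈ SObreve A E B) ∧
    -- every x ∈ SO(E) is inverted by conjugation by some (g, -1) ∈ SŎ(E) \ SO(E)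
    (∀ x : E ≃ₗ[A] E, (∀ u v, B (x u) (x v) = B u v) →
      LinearMap.det (x : E →ₗ[A] E) = 1 →
      ∃ g : E ≃ₗ[A] E, (g, -1) ∈ SObreve A E B ∧ ∀ v, g (x v) = x.symm (g v)) := by
  have inv : ∀ x : E ≃ₗ[A] E, (∀ u v, B (x u) (x v) = B u v) →
      ∃ g : E ≃ₗ[A] E, (g, -1) ∈ SObreve A E B ∧ ∀ v, g (x v) = x.symm (g v) := by
    intro x hx
    let B' : LinearMap.BilinForm A E := LinearMap.mk₂ A B hadd hsmul
      (fun u v v' => by rw [hsymm, hadd, hsymm v, hsymm v'])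
      (fun c u v => by rw [hsymm, hsmul, hsymm v, smul_eq_mul])
    have hp : IsometryPair B' (x : E →ₗ[A] E) (x.symm : E →ₗ[A] E) :=
      ⟨hsymm, hnondeg, hx, x.symm_apply_apply, x.apply_symm_apply⟩
    obtain ⟨g, g1, g2, g3⟩ := hp.isInverted
    have hd : LinearMap.det g ≠ 0 := by
      rw [g3]; exact pow_ne_zero _ (neg_ne_zero.2 one_ne_zero)
    refine ⟨LinearMap.equivOfDetNeZero g hd, ⟨g1, Or.inr rfl, ?_⟩, g2⟩
    simpa using g3
  refine ⟨⟨fun u v => rfl, Or.inl rfl, ?_⟩, ?_, ?_, ?_, ?_, fun x hx _ => inv x hx⟩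
  · simp
  · rintro ⟨g, a⟩ ⟨h, b⟩ ⟨g1, g2, g3⟩ ⟨h1, h2, h3⟩
    refine ⟨fun u v => (g1 _ _).trans (h1 _ _), ?_, ?_⟩
    · simp only at g2 h2
      rcases g2 with rfl | rfl <;> rcases h2 with rfl | rfl <;> simp
    · simp only at g3 h3
      simp [g3, h3, mul_pow]
  · rintro ⟨g, a⟩ ⟨g1, g2, g3⟩
    refine ⟨fun u v => ?_, ?_, ?_⟩
    · rw [← g1]
      exact congrArg₂ B (g.apply_symm_apply u) (g.apply_symm_apply v)
    · simp only at g2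
      rcases g2 with rfl | rfl <;> simp
    · have e : LinearMap.det (g.symm : E →ₗ[A] E) = (LinearMap.det (g : E →ₗ[A] E))⁻¹ :=
        eq_inv_of_mul_eq_one_left (LinearEquiv.det_symm_mul_det g)
      simp only at g3
      change LinearMap.det (g.symm : E →ₗ[A] E) = _
      simp [e, g3]
  · intro g h1 h2
    exact ⟨h1, Or.inl rfl, by simpa using h2⟩
  · intro _
    obtain ⟨g, hg, -⟩ := inv 1 fun u v => rfl
    exact ⟨g, hg⟩
end
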